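/- arXiv:2102.03737 — 2 statements merged into one kernel-verified Lean document; each statement's English description precedes it below -/
import Mathlib

section
/- Let (S,d) and (X,d_X) be compact metric spaces, F:S→S and g:X→X Borel measurable maps, μ_g a g-invariant Borel probability measure on X, and s:X→S, q:S→X Borel measurable maps with q∘F=g∘q on S and q∘s=id_X. Assume that sup_{z∈S} d(Fⁿ(z), Fⁿ(s(q(z)))) → 0 as n→∞. Then for every continuous ψ:S→ℝ the sequence (∫_X ψ(Fⁿ(s(x))) dμ_g(x))_{n≥0} is Cauchy, hence converges, and there exists a unique Borel probability measure μ_F on S such that ∫ψ dμ_F = lim_{n→∞} ∫_X ψ(Fⁿ(s(x))) dμ_g(x) for every continuous ψ:S→ℝ. -/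
open MeasureTheory Set Filter Topology
open scoped ENNReal

noncomputable section

/-- If the orbits of `z` and `s (q z)` under `F` are uniformly asymptotic, then the integrals of a
continuous observable along the orbits of the section form a Cauchy sequence. -/
theorem cauchySeq_integral_iterate_section
    {S X : Type*} [MetricSpace S] [CompactSpace S] [MeasurableSpace S] [BorelSpace S]
    [MeasurableSpace X] {F : S → S} {g : X → X} (hF : Measurable F)
    {μ : Measure X} [IsProbabilityMeasure μ] (hg : MeasurePreserving g μ μ)
    {s : X → S} {q : S → X} (hs : Measurable s)
    (hqF : Function.Semiconj q F g) (hqs : Function.LeftInverse q s)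
    (hcontr : Tendsto (fun n : ℕ => ⨆ z : S, dist (F^[n] z) (F^[n] (s (q z)))) atTop (𝓝 0))
    {ψ : S → ℝ} (hψ : Continuous ψ) :
    CauchySeq fun n : ℕ => ∫ x, ψ (F^[n] (s x)) ∂μ := by
  have hFs (n : ℕ) : Measurable fun x => F^[n] (s x) := (hF.iterate n).comp hs
  obtain ⟨C, hC⟩ := isCompact_univ.exists_bound_of_continuousOn hψ.continuousOn
  have hint {f : X → S} (hf : Measurable f) : Integrable (fun x => ψ (f x)) μ :=
    Integrable.of_bound (hψ.measurable.comp hf).aestronglyMeasurable C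
      (ae_of_all _ fun x => hC _ (mem_univ _))
  refine Metric.cauchySeq_iff'.2 fun ε hε => ?_
  obtain ⟨δ, hδ, hψδ⟩ := Metric.uniformContinuous_iff.1
    (CompactSpace.uniformContinuous_of_continuous hψ) (ε / 2) (half_pos hε)
  obtain ⟨N, hN⟩ := (hcontr.eventually (gt_mem_nhds hδ)).exists
  have hdist (z : S) : dist (F^[N] z) (F^[N] (s (q z))) < δ := by
    refine (le_ciSup ⟨Metric.diam (univ : Set S), ?_⟩ z).trans_lt hN
    rintro _ ⟨w, rfl⟩
    exact Metric.dist_le_diam_of_mem isCompact_univ.isBounded (mem_univ _) (mem_univ _)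
  refine ⟨N, fun n hn => ?_⟩
  obtain ⟨k, rfl⟩ := Nat.exists_eq_add_of_le hn
  have hgk : MeasurePreserving g^[k] μ μ := hg.iterate k
  have hshift : ∫ x, ψ (F^[N] (s x)) ∂μ = ∫ x, ψ (F^[N] (s (g^[k] x))) ∂μ := by
    rw [← integral_map (f := fun x => ψ (F^[N] (s x))) hgk.aemeasurable
      (hψ.measurable.comp (hFs N)).aestronglyMeasurable, hgk.map_eq]
  have hbound (x : X) : ‖ψ (F^[N + k] (s x)) - ψ (F^[N] (s (g^[k] x)))‖ ≤ ε / 2 := by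
    have h := hdist (F^[k] (s x))
    rw [(hqF.iterate_right k).eq, hqs x, ← Function.iterate_add_apply] at h
    exact (dist_eq_norm _ _).symm.trans_le (hψδ h).le
  rw [dist_eq_norm, hshift, ← integral_sub (hint (hFs (N + k)))
    (hint (f := fun x => F^[N] (s (g^[k] x))) ((hFs N).comp hgk.measurable))]
  calc _ ≤ ε / 2 * μ.real univ := norm_integral_le_of_norm_le_const (ae_of_all _ hbound)
    _ < ε := by simp [hε]

/-- On a compact metric space, probability measures whose integrals against each continuous
function form a Cauchy sequence converge weakly to a probability measure. -/
theorem exists_probabilityMeasure_tendsto_integral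
    {S : Type*} [MetricSpace S] [CompactSpace S] [MeasurableSpace S] [BorelSpace S]
    (ν : ℕ → ProbabilityMeasure S)
    (hν : ∀ ψ : S → ℝ, Continuous ψ → CauchySeq fun n => ∫ z, ψ z ∂(ν n : Measure S)) :
    ∃ ν' : ProbabilityMeasure S, ∀ ψ : S → ℝ, Continuous ψ →
      Tendsto (fun n => ∫ z, ψ z ∂(ν n : Measure S)) atTop (𝓝 (∫ z, ψ z ∂(ν' : Measure S))) := by
  obtain ⟨ν', hν'⟩ := exists_clusterPt_of_compactSpace (map ν atTop)
  refine ⟨ν', fun ψ hψ => le_nhds_of_cauchy_adhp (hν ψ hψ) ?_⟩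
  exact MapClusterPt.continuousAt_comp
    (f := fun m : ProbabilityMeasure S => ∫ z, ψ z ∂(m : Measure S))
    (ProbabilityMeasure.continuous_integral_boundedContinuousFunction
      (BoundedContinuousFunction.mkOfCompact ⟨ψ, hψ⟩)).continuousAt hν'

/-- The abstract lifting construction: given a factor map `q` intertwining `F` with `g`,
a section `s` of `q`, a `g`-invariant probability measure `μ_g`, and uniform asymptotic
contraction of `F` along the fibers joining `z` to `s(q(z))`, the integrals
`∫ ψ(Fⁿ(s(x))) dμ_g` form a Cauchy sequence for every continuous `ψ`, and there is a unique
Borel probability measure `μ_F` representing their limits. -/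
theorem lifting_construction
    {S X : Type*} [MetricSpace S] [CompactSpace S]
    [MeasurableSpace S] [BorelSpace S]
    [MetricSpace X] [CompactSpace X] [MeasurableSpace X] [BorelSpace X]
    (F : S → S) (g : X → X) (hF : Measurable F) (hg : Measurable g)
    (μg : Measure X) [IsProbabilityMeasure μg]
    (hinv : ∀ A : Set X, MeasurableSet A → μg (g ⁻¹' A) = μg A)
    (s : X → S) (q : S → X) (hs : Measurable s) (hq : Measurable q)
    (hqF : ∀ z : S, q (F z) = g (q z)) (hqs : ∀ x : X, q (s x) = x)
    (hcontr : Tendsto (fun n : ℕ => ⨆ z : S, dist (F^[n] z) (F^[n] (s (q z)))) atTop (𝓝 0)) :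
    (∀ ψ : S → ℝ, Continuous ψ → CauchySeq (fun n : ℕ => ∫ x, ψ (F^[n] (s x)) ∂μg)) ∧
    ∃! μF : Measure S, IsProbabilityMeasure μF ∧
      ∀ ψ : S → ℝ, Continuous ψ →
        Tendsto (fun n : ℕ => ∫ x, ψ (F^[n] (s x)) ∂μg) atTop (𝓝 (∫ z, ψ z ∂μF)) := by
  have hgμ : MeasurePreserving g μg μg :=
    ⟨hg, Measure.ext fun A hA => by rw [Measure.map_apply hg hA, hinv A hA]⟩
  have hcauchy (ψ : S → ℝ) (hψ : Continuous ψ) :=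
    cauchySeq_integral_iterate_section hF hgμ hs hqF hqs hcontr hψ
  refine ⟨hcauchy, ?_⟩
  have hFs (n : ℕ) : Measurable fun x => F^[n] (s x) := (hF.iterate n).comp hs
  let ν (n : ℕ) : ProbabilityMeasure S :=
    ⟨μg.map fun x => F^[n] (s x), Measure.isProbabilityMeasure_map (hFs n).aemeasurable⟩
  have hν (ψ : S → ℝ) (hψ : Continuous ψ) :
      (fun n => ∫ z, ψ z ∂(ν n : Measure S)) = fun n => ∫ x, ψ (F^[n] (s x)) ∂μg :=
    funext fun n => integral_map (hFs n).aemeasurable hψ.aestronglyMeasurable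
  obtain ⟨ν', hν'⟩ := exists_probabilityMeasure_tendsto_integral ν fun ψ hψ => by
    rw [hν ψ hψ]
    exact hcauchy ψ hψ
  refine ⟨ν', ⟨inferInstance, fun ψ hψ => hν ψ hψ ▸ hν' ψ hψ⟩, ?_⟩
  rintro μ ⟨_, hμ⟩
  refine ext_of_forall_integral_eq_of_IsFiniteMeasure fun f => ?_
  exact tendsto_nhds_unique (hμ f f.continuous) (hν f f.continuous ▸ hν' f f.continuous)
end
end

section
/- Let 1/2<b<a<1 and consider the piecewise affine generalized horseshoe map F on [0,1]² with two strips S₁=[0,1/2]×[0,1] and S₂=[1/2,1]×[0,1], given by F(x,y) = (2x, (a+2x(b−a))y + (1−a)·2x·(a−b)) for (x,y)∈S₁ and F(x,y) = (2x−1, (a+(2x−1)(b−a))y) for (x,y)∈S₂. Then F satisfies the transversality condition: there exists δ>0 such that limsup_{r→0} r⁻² Σ_{([A]_n,[B]_n)∈M_δ^{NTr}(r)} vol(U_{[A]_n}∩U_{[B]_n})·|I_{[A]_n}|·|I_{[B]_n}| < ∞. -/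
open MeasureTheory Set Filter Topology
open scoped ENNReal

noncomputable section

namespace AffineHorseshoe

/-- Points of the plane. -/
abbrev Pt : Type := ℝ × ℝ

/-- The unit square `S = [0,1]²`. -/
def unitSq : Set Pt := Icc (0:ℝ) 1 ×ˢ Icc (0:ℝ) 1

/-- Arclength via one-dimensional Hausdorff measure. -/
def len (s : Set Pt) : ℝ≥0∞ := μH[1] s

/-- The two strips `S₁ = [0,1/2]×[0,1]` and `S₂ = [1/2,1]×[0,1]`. -/
def Sbr : ℕ → Set Pt
  | 1 => Icc (0:ℝ) (1/2) ×ˢ Icc (0:ℝ) 1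
  | _ => Icc (1/2:ℝ) 1 ×ˢ Icc (0:ℝ) 1

/-- The two affine branches of the map. -/
def Fbr (a b : ℝ) : ℕ → Pt → Pt
  | 1 => fun p => (2 * p.1, (a + 2 * p.1 * (b - a)) * p.2 + (1 - a) * (2 * p.1) * (a - b))
  | _ => fun p => (2 * p.1 - 1, (a + (2 * p.1 - 1) * (b - a)) * p.2)

/-- `S_{[A]_n}`. -/
def wordS (a b : ℝ) : List ℕ → Set Pt
  | [] => unitSq
  | [i] => Sbr i
  | i :: rest => Sbr i ∩ Fbr a b i ⁻¹' wordS a b rest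

/-- `F_{[A]_n} = F_{a_n} ∘ ⋯ ∘ F_{a₁}`. -/
def wordF (a b : ℝ) : List ℕ → Pt → Pt
  | [] => id
  | i :: rest => wordF a b rest ∘ Fbr a b i

/-- `U_{[A]_n} = F_{[A]_n}(S_{[A]_n})`. -/
def wordU (a b : ℝ) (w : List ℕ) : Set Pt := wordF a b w '' wordS a b w

/-- The prefix `[A]_n` of an infinite word. -/
def prefixWord (A : ℕ → ℕ) (n : ℕ) : List ℕ := List.ofFn (fun i : Fin n => A i)

/-- The unstable manifold `W^u_A = ⋂_{n≥1} U_{[A]_n}`. -/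
def leafU (a b : ℝ) (A : ℕ → ℕ) : Set Pt := ⋂ n : ℕ, wordU a b (prefixWord A (n + 1))

/-- The (vertical) stable leaf `W^s(x) = {x}×[0,1]`. -/
def Ws (x : ℝ) : Set Pt := {x} ×ˢ Icc (0:ℝ) 1

/-- `d([A]_n)`: the maximal height of the vertical sections of `U_{[A]_n}`. -/
def dW (a b : ℝ) (w : List ℕ) : ℝ≥0∞ := ⨆ x ∈ Icc (0:ℝ) 1, len (wordU a b w ∩ Ws x)

/-- `I_{[A]_n}`: the vertical projection of `S_{[A]_n}` (a dyadic interval). -/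
def IWord (a b : ℝ) (w : List ℕ) : Set ℝ := Prod.fst '' wordS a b w

open Classical in
/-- The intersection point `W^u_A(x) = W^u_A ∩ W^s(x)`. -/
def uPoint (a b : ℝ) (A : ℕ → ℕ) (x : ℝ) : Pt :=
  if h : (leafU a b A ∩ Ws x).Nonempty then h.choose else (x, 0)

/-- Continuation of a finite word by an infinite one. -/
def extendWord (w : List ℕ) (A : ℕ → ℕ) : ℕ → ℕ :=
  fun n => if h : n < w.length then w.get ⟨n, h⟩ else A (n - w.length)

/-- `δ`-transversality of two infinite words. -/
def TransversalInf (a b δ : ℝ) (A B : ℕ → ℕ) : Prop :=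
  ∀ᵐ x ∂(volume.restrict (Icc (0:ℝ) 1)),
    δ < dist (uPoint a b A x) (uPoint a b B x) ∨
    δ < ‖deriv (fun t => uPoint a b A t) x - deriv (fun t => uPoint a b B t) x‖

/-- `δ`-transversality of two finite words: all their infinite continuations (by words in
the alphabet `{1,2}`) are `δ`-transversal. -/
def TransversalFin (a b δ : ℝ) (w₁ w₂ : List ℕ) : Prop :=
  ∀ A B : ℕ → ℕ, (∀ k, A k = 1 ∨ A k = 2) → (∀ k, B k = 1 ∨ B k = 2) →
    TransversalInf a b δ (extendWord w₁ A) (extendWord w₂ B)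

/-- `M(r)`: truncations `[A]_n` of infinite words over `{1,2}` at the largest `n` with
`d([A]_n) ≥ r`. -/
def Mset (a b r : ℝ) : Set (List ℕ) :=
  {w | ∃ A : ℕ → ℕ, (∀ k, A k = 1 ∨ A k = 2) ∧ ∃ n : ℕ,
    w = prefixWord A (n + 1) ∧ ENNReal.ofReal r ≤ dW a b w ∧
    ∀ m, n + 1 < m → dW a b (prefixWord A m) < ENNReal.ofReal r}

open Classical in
/-- The sum over non-`δ`-transversal pairs in `M(r)²` of
`vol(U_{[A]_n} ∩ U_{[B]_n})·|I_{[A]_n}|·|I_{[B]_n}|`. -/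
def NTrSum (a b δ r : ℝ) : ℝ≥0∞ :=
  ∑' p : List ℕ × List ℕ,
    if p.1 ∈ Mset a b r ∧ p.2 ∈ Mset a b r ∧ ¬ TransversalFin a b δ p.1 p.2 then
      volume (wordU a b p.1 ∩ wordU a b p.2) * volume (IWord a b p.1) * volume (IWord a b p.2)
    else 0

/-! ### Strips and leaves -/

/-- The vertical contraction rate above the image point with abscissa `x`. -/
def lam (a b x : ℝ) : ℝ := a + x * (b - a)

/-- The inverse branches of the base map. -/
def pre : ℕ → ℝ → ℝ
  | 1, x => x / 2
  | _, x => (x + 1) / 2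

/-- The slope of the translation part of the branches. -/
def offSlope (a b : ℝ) : ℕ → ℝ
  | 1 => (1 - a) * (a - b)
  | _ => 0

/-- Lower boundary of the strip of a word, listed from the newest symbol to the oldest one. -/
def lo (a b : ℝ) : List ℕ → ℝ → ℝ
  | [], _ => 0
  | i :: v, x => offSlope a b i * x + lam a b x * lo a b v (pre i x)

/-- Height of the strip of a word, listed from the newest symbol to the oldest one. -/
def height (a b : ℝ) : List ℕ → ℝ → ℝ
  | [], _ => 1
  | i :: v, x => lam a b x * height a b v (pre i x)

/-- Derivative of `lo`. -/
def loSlope (a b : ℝ) : List ℕ → ℝ → ℝ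
  | [], _ => 0
  | i :: v, x => offSlope a b i +
      ((b - a) * lo a b v (pre i x) + lam a b x * (loSlope a b v (pre i x) / 2))

lemma pre_one (x : ℝ) : pre 1 x = x / 2 := rfl

lemma pre_of_ne {i : ℕ} (hi : i ≠ 1) (x : ℝ) : pre i x = (x + 1) / 2 := by
  match i, hi with
  | 0, _ => rfl
  | n + 2, _ => rfl

lemma offSlope_one (a b : ℝ) : offSlope a b 1 = (1 - a) * (a - b) := rfl

lemma offSlope_of_ne (a b : ℝ) {i : ℕ} (hi : i ≠ 1) : offSlope a b i = 0 := by
  match i, hi with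
  | 0, _ => rfl
  | n + 2, _ => rfl

lemma pre_mem (i : ℕ) {x : ℝ} (hx : x ∈ Icc (0:ℝ) 1) : pre i x ∈ Icc (0:ℝ) 1 := by
  obtain ⟨h0, h1⟩ := hx
  by_cases hi : i = 1
  · subst hi; rw [pre_one]; constructor <;> linarith
  · rw [pre_of_ne hi]; constructor <;> linarith

lemma hasDerivAt_pre (i : ℕ) (x : ℝ) : HasDerivAt (pre i) (1 / 2) x := by
  by_cases hi : i = 1
  · subst hi
    exact (hasDerivAt_id x).div_const 2
  · rw [funext (pre_of_ne hi)]
    exact ((hasDerivAt_id x).add_const 1).div_const 2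

lemma hasDerivAt_lam (a b x : ℝ) : HasDerivAt (lam a b) (b - a) x := by
  exact (((hasDerivAt_id x).mul_const (b - a)).const_add a).congr_deriv (one_mul _)

lemma hasDerivAt_lo (a b : ℝ) (v : List ℕ) :
    ∀ x, HasDerivAt (lo a b v) (loSlope a b v x) x := by
  induction v with
  | nil => intro x; exact hasDerivAt_const x 0
  | cons i v ih =>
    intro x
    have h1 := (hasDerivAt_id x).const_mul (offSlope a b i)
    have h2 := (ih (pre i x)).comp x (hasDerivAt_pre i x)
    have h3 := h1.add ((hasDerivAt_lam a b x).mul h2)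
    refine h3.congr_deriv ?_
    simp only [loSlope, Function.comp]
    ring

@[fun_prop]
lemma continuous_lam (a b : ℝ) : Continuous (lam a b) := by
  unfold lam; fun_prop

lemma continuous_pre (i : ℕ) : Continuous (pre i) :=
  continuous_iff_continuousAt.2 fun x => (hasDerivAt_pre i x).continuousAt

lemma continuous_lo (a b : ℝ) (v : List ℕ) : Continuous (lo a b v) :=
  continuous_iff_continuousAt.2 fun x => (hasDerivAt_lo a b v x).continuousAt

lemma continuous_height (a b : ℝ) (v : List ℕ) : Continuous (height a b v) := by
  induction v with
  | nil => exact continuous_const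
  | cons i v ih => exact (continuous_lam a b).mul (ih.comp (continuous_pre i))

section Bounds

variable {a b : ℝ}

lemma lam_le (hba : b < a) {x : ℝ} (hx : x ∈ Icc (0:ℝ) 1) : lam a b x ≤ a := by
  unfold lam; nlinarith [hx.1]

lemma le_lam (hba : b < a) {x : ℝ} (hx : x ∈ Icc (0:ℝ) 1) : b ≤ lam a b x := by
  unfold lam; nlinarith [hx.2]

lemma lo_nonneg (hb : 0 < b) (hba : b < a) (ha : a < 1) (v : List ℕ) :
    ∀ x ∈ Icc (0:ℝ) 1, 0 ≤ lo a b v x := by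
  induction v with
  | nil => intro x _; exact le_rfl
  | cons i v ih =>
    intro x hx
    have h1 := ih _ (pre_mem i hx)
    have h2 := le_lam hba hx
    have h3 : 0 ≤ offSlope a b i := by
      by_cases hi : i = 1
      · subst hi; rw [offSlope_one]; nlinarith
      · rw [offSlope_of_ne a b hi]
    have := mul_nonneg (hb.le.trans h2) h1
    have := mul_nonneg h3 hx.1
    simp only [lo]; linarith

lemma lo_le (hb : 0 < b) (hba : b < a) (ha : a < 1) (v : List ℕ) :
    ∀ x ∈ Icc (0:ℝ) 1, (a - b) * lo a b v x ≤ (1 - a) * (a - b) := by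
  induction v with
  | nil => intro x _; simp only [lo]; nlinarith
  | cons i v ih =>
    intro x hx
    have h1 := ih _ (pre_mem i hx)
    have h2 := le_lam hba hx
    have hg : 0 ≤ (1 - a) * (a - b) := by nlinarith
    have h3 : offSlope a b i ≤ (1 - a) * (a - b) := by
      by_cases hi : i = 1
      · subst hi; rw [offSlope_one]
      · rwa [offSlope_of_ne a b hi]
    have h4 := mul_le_mul_of_nonneg_left h1 (hb.le.trans h2)
    have h5 := mul_le_mul_of_nonneg_right h3 (mul_nonneg (sub_nonneg.2 hba.le) hx.1)
    simp only [lo]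
    have h6 : lam a b x = a - (a - b) * x := by unfold lam; ring
    rw [h6] at h4 ⊢
    nlinarith

lemma height_pos (hb : 0 < b) (hba : b < a) (v : List ℕ) :
    ∀ x ∈ Icc (0:ℝ) 1, 0 < height a b v x := by
  induction v with
  | nil => intro x _; exact one_pos
  | cons i v ih =>
    intro x hx
    exact mul_pos (hb.trans_le (le_lam hba hx)) (ih _ (pre_mem i hx))

lemma exists_height_append (v w : List ℕ) :
    ∀ x ∈ Icc (0:ℝ) 1, ∃ y ∈ Icc (0:ℝ) 1,
      height a b (v ++ w) x = height a b v x * height a b w y ∧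
      lo a b (v ++ w) x = lo a b v x + height a b v x * lo a b w y := by
  induction v with
  | nil => intro x hx; exact ⟨x, hx, by simp [height], by simp [lo, height]⟩
  | cons i v ih =>
    intro x hx
    obtain ⟨y, hy, h1, h2⟩ := ih _ (pre_mem i hx)
    refine ⟨y, hy, ?_, ?_⟩
    · simp only [List.cons_append, height, h1]; ring
    · simp only [List.cons_append, height, lo, h2]; ring

lemma height_le_pow (hb : 0 < b) (hba : b < a) (v : List ℕ) :
    ∀ x ∈ Icc (0:ℝ) 1, height a b v x ≤ a ^ v.length := by
  induction v with
  | nil => intro x _; simp [height]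
  | cons i v ih =>
    intro x hx
    simp only [height, List.length_cons, pow_succ']
    exact mul_le_mul (lam_le hba hx) (ih _ (pre_mem i hx))
      (height_pos hb hba v _ (pre_mem i hx)).le (hb.trans hba).le

lemma lo_add_height_le (hb : 0 < b) (hba : b < a) (ha : a < 1) (v : List ℕ) :
    ∀ x ∈ Icc (0:ℝ) 1, lo a b v x + height a b v x ≤ 1 := by
  induction v with
  | nil => intro x _; simp [lo, height]
  | cons i v ih =>
    intro x hx
    have h1 := ih _ (pre_mem i hx)
    have h2 := le_lam hba hx
    have hg : 0 ≤ (1 - a) * (a - b) := by nlinarith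
    have h3 : offSlope a b i ≤ (1 - a) * (a - b) := by
      by_cases hi : i = 1
      · subst hi; rw [offSlope_one]
      · rwa [offSlope_of_ne a b hi]
    have h4 := mul_le_mul_of_nonneg_left h1 (hb.le.trans h2)
    have h5 := mul_le_mul_of_nonneg_right h3 hx.1
    have h6 : lam a b x = a - (a - b) * x := by unfold lam; ring
    simp only [lo, height]
    have h7 : (1 - a) * (a - b) * x ≤ (a - b) * x :=
      mul_le_mul_of_nonneg_right (by nlinarith) hx.1
    nlinarith

/-- Bounded distortion of strip heights. -/
lemma height_distortion (hb : 0 < b) (hba : b < a) (v : List ℕ) :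
    ∀ x ∈ Icc (0:ℝ) 1, ∀ y ∈ Icc (0:ℝ) 1,
      height a b v x ≤ Real.exp (2 * ((a - b) / b) * |x - y|) * height a b v y := by
  induction v with
  | nil =>
    intro x _ y _
    simp only [height, mul_one]
    have : 0 < (a - b) / b := div_pos (by linarith) hb
    exact Real.one_le_exp (by positivity)
  | cons i v ih =>
    intro x hx y hy
    have hc : 0 < (a - b) / b := div_pos (by linarith) hb
    have h1 := ih _ (pre_mem i hx) _ (pre_mem i hy)
    have h2 : |pre i x - pre i y| = |x - y| / 2 := by
      have : pre i x - pre i y = (x - y) / 2 := by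
        by_cases hi : i = 1
        · subst hi; simp only [pre_one]; ring
        · simp only [pre_of_ne hi]; ring
      rw [this, abs_div, abs_of_pos (two_pos : (0:ℝ) < 2)]
    have hly := le_lam hba hy
    have h3 : lam a b x ≤ Real.exp ((a - b) / b * |x - y|) * lam a b y := by
      have e1 := Real.add_one_le_exp ((a - b) / b * |x - y|)
      have e2 : lam a b x ≤ lam a b y + (a - b) * |x - y| := by
        have : lam a b x = lam a b y + (a - b) * (y - x) := by unfold lam; ring
        rw [this]
        have := neg_abs_le (x - y)
        nlinarith
      have e3 : (a - b) * |x - y| ≤ (a - b) / b * |x - y| * lam a b y := by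
        have : (a - b) * |x - y| = (a - b) / b * |x - y| * b := by field_simp
        rw [this]
        exact mul_le_mul_of_nonneg_left hly (by positivity)
      nlinarith [mul_le_mul_of_nonneg_right e1 (hb.le.trans hly)]
    simp only [height]
    calc lam a b x * height a b v (pre i x)
        ≤ (Real.exp ((a - b) / b * |x - y|) * lam a b y) *
          (Real.exp (2 * ((a - b) / b) * |pre i x - pre i y|) * height a b v (pre i y)) :=
          mul_le_mul h3 h1 (height_pos hb hba v _ (pre_mem i hx)).le
            (mul_nonneg (Real.exp_pos _).le (hb.le.trans hly))
      _ = (Real.exp ((a - b) / b * |x - y|) *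
          Real.exp (2 * ((a - b) / b) * |pre i x - pre i y|)) *
          (lam a b y * height a b v (pre i y)) := by ring
      _ = _ := by rw [← Real.exp_add, h2]; congr 2; ring

lemma height_antitone (hb : 0 < b) (hba : b < a) (v : List ℕ) :
    ∀ x ∈ Icc (0:ℝ) 1, ∀ y ∈ Icc (0:ℝ) 1, x ≤ y → height a b v y ≤ height a b v x := by
  induction v with
  | nil => intro x _ y _ _; exact le_rfl
  | cons i v ih =>
    intro x hx y hy hxy
    have h2 : pre i x ≤ pre i y := by
      by_cases hi : i = 1
      · subst hi; simp only [pre_one]; linarith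
      · simp only [pre_of_ne hi]; linarith
    have h3 : lam a b y ≤ lam a b x := by unfold lam; nlinarith
    exact mul_le_mul h3 (ih _ (pre_mem i hx) _ (pre_mem i hy) h2)
      (height_pos hb hba v _ (pre_mem i hy)).le (hb.le.trans (le_lam hba hx))

end Bounds

/-! ### Transversality of strips with different newest symbols -/

/-- The derivative of `lo`, corrected by a multiple of `lo`. -/
def corrSlope (a b : ℝ) (v : List ℕ) (x : ℝ) : ℝ :=
  loSlope a b v x + 2 * (a - b) / a * lo a b v x

lemma corrSlope_cons {a : ℝ} (b : ℝ) (ha : a ≠ 0) (i : ℕ) (v : List ℕ) (x : ℝ) :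
    corrSlope a b (i :: v) x = offSlope a b i * (1 + 2 * (a - b) / a * x)
      - (a - b) ^ 2 * x / a * lo a b v (pre i x)
      + lam a b x * corrSlope a b v (pre i x) / 2 := by
  simp only [corrSlope, loSlope, lo, lam]
  field_simp
  ring

lemma corrSlope_le {a b p q : ℝ} (hb : 0 < b) (hba : b < a) (ha : a < 1)
    (hp : 0 ≤ p) (hq : 0 ≤ q) (h1 : 1 + a * p / 2 ≤ p)
    (h2 : 2 * (a - b) / a + a * q / 4 - (a - b) * p / 2 ≤ q) (h3 : a * q / 4 ≤ 1)
    (v : List ℕ) :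
    ∀ x ∈ Icc (0:ℝ) 1, corrSlope a b v x ≤ (1 - a) * (a - b) * (p + q * x) := by
  have hg : 0 ≤ (1 - a) * (a - b) := mul_nonneg (by linarith) (by linarith)
  have hβ : 0 ≤ a - b := by linarith
  have ha0 : 0 < a := by linarith
  induction v with
  | nil =>
    intro x hx
    simp only [corrSlope, loSlope, lo, mul_zero, add_zero]
    have := mul_nonneg hq hx.1
    positivity
  | cons i v ih =>
    intro x hx
    have hy := pre_mem i hx
    have hl := lo_nonneg hb hba ha v _ hy
    have hlam := hb.le.trans (le_lam hba hx)
    have hc := mul_le_mul_of_nonneg_left (ih _ hy) hlam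
    rw [corrSlope_cons b ha0.ne']
    have hd : 0 ≤ (a - b) ^ 2 * x / a * lo a b v (pre i x) :=
      mul_nonneg (div_nonneg (mul_nonneg (sq_nonneg _) hx.1) ha0.le) hl
    have hx0 := hx.1
    have hβx : 0 ≤ (a - b) * x := mul_nonneg hβ hx0
    have key : ∀ o : ℝ, offSlope a b i = (1 - a) * (a - b) * o →
        o * (1 + 2 * (a - b) / a * x) + (a - (a - b) * x) * (p + q * pre i x) / 2 ≤ p + q * x →
        offSlope a b i * (1 + 2 * (a - b) / a * x)
          - (a - b) ^ 2 * x / a * lo a b v (pre i x) + lam a b x * corrSlope a b v (pre i x) / 2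
          ≤ (1 - a) * (a - b) * (p + q * x) := by
      intro o ho h
      have h' := mul_le_mul_of_nonneg_left h hg
      have hl2 : lam a b x = a - (a - b) * x := by unfold lam; ring
      rw [ho]
      rw [hl2] at hc ⊢
      nlinarith
    by_cases hi : i = 1
    · subst hi
      refine key 1 (by rw [offSlope_one]; ring) ?_
      rw [pre_one]
      have h2' := mul_le_mul_of_nonneg_right h2 hx0
      have : 0 ≤ (a - b) * x * (q * x) := mul_nonneg hβx (mul_nonneg hq hx0)
      nlinarith
    · refine key 0 (by rw [offSlope_of_ne a b hi]; ring) ?_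
      rw [pre_of_ne hi]
      have e1 : 0 ≤ (a - b) * x * (p + q * ((x + 1) / 2)) :=
        mul_nonneg hβx (add_nonneg hp (mul_nonneg hq (by linarith)))
      have e2 : 0 ≤ (1 - a) * (q * x) := mul_nonneg (by linarith) (mul_nonneg hq hx0)
      have e3 := mul_nonneg hq hx0
      nlinarith

lemma le_corrSlope {a b l0 l1 : ℝ} (hb : 0 < b) (hba : b < a) (ha : a < 1)
    (hl0 : 0 ≤ l0) (hl1 : 0 ≤ l1) (h1 : a / 2 * (l0 + l1 / 2) ≤ l0)
    (h2 : (a - b) / a + a * l1 / 4 ≤ l1) (v : List ℕ) :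
    ∀ x ∈ Icc (0:ℝ) 1, -((1 - a) * (a - b) * (l0 + l1 * x)) ≤ corrSlope a b v x := by
  have hg : 0 ≤ (1 - a) * (a - b) := mul_nonneg (by linarith) (by linarith)
  have hβ : 0 ≤ a - b := by linarith
  have ha0 : 0 < a := by linarith
  induction v with
  | nil =>
    intro x hx
    simp only [corrSlope, loSlope, lo, mul_zero, add_zero]
    have := mul_nonneg hl1 hx.1
    exact neg_nonpos.2 (by positivity)
  | cons i v ih =>
    intro x hx
    have hy := pre_mem i hx
    have hl := lo_le hb hba ha v _ hy
    have hlam := hb.le.trans (le_lam hba hx)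
    have hc := mul_le_mul_of_nonneg_left (ih _ hy) hlam
    have hx0 := hx.1
    rw [corrSlope_cons b ha0.ne']
    have hd : (a - b) ^ 2 * x / a * lo a b v (pre i x)
        ≤ (1 - a) * (a - b) * ((a - b) / a * x) := by
      have := mul_le_mul_of_nonneg_left hl (mul_nonneg (div_nonneg hβ ha0.le) hx0)
      calc _ = (a - b) / a * x * ((a - b) * lo a b v (pre i x)) := by ring
        _ ≤ _ := this
        _ = _ := by ring
    have ho : 0 ≤ offSlope a b i * (1 + 2 * (a - b) / a * x) := by
      refine mul_nonneg ?_ (by positivity)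
      by_cases hi : i = 1
      · subst hi; rwa [offSlope_one]
      · rw [offSlope_of_ne a b hi]
    have hpre : pre i x ≤ (x + 1) / 2 := by
      by_cases hi : i = 1
      · subst hi; rw [pre_one]; linarith
      · rw [pre_of_ne hi]
    have hs : lam a b x * (l0 + l1 * pre i x) / 2 ≤ a / 2 * (l0 + l1 * ((x + 1) / 2)) := by
      have e1 := lam_le hba hx
      have e2 := mul_le_mul_of_nonneg_left hpre hl1
      have e3 : 0 ≤ l0 + l1 * ((x + 1) / 2) := by
        have := hx.1; positivity
      nlinarith [mul_le_mul_of_nonneg_left e2 hlam, mul_le_mul_of_nonneg_right e1 e3]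
    have hs' := mul_le_mul_of_nonneg_left hs hg
    have ht := mul_le_mul_of_nonneg_left (add_le_add h1 (mul_le_mul_of_nonneg_right h2 hx0)) hg
    nlinarith

/-- The difference of the lower boundaries of two strips, normalised so that it is monotone. -/
def gapFn (a b : ℝ) (v w : List ℕ) (u : ℝ) : ℝ :=
  Real.exp ((a - b) / a * u) *
    ((1 - a) * (a - b) * u / lam a b u + lo a b v (pre 1 u) - lo a b w (pre 2 u))

lemma gapFn_eq {a b : ℝ} (v w : List ℕ) {u : ℝ} (hu : lam a b u ≠ 0) :
    gapFn a b v w u = Real.exp ((a - b) / a * u) / lam a b u *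
      (lo a b (1 :: v) u - lo a b (2 :: w) u) := by
  simp only [gapFn, lo, offSlope_one, offSlope_of_ne a b (show (2:ℕ) ≠ 1 by norm_num)]
  field_simp
  ring

lemma hasDerivAt_gapFn {a b : ℝ} (v w : List ℕ) {u : ℝ} (hu : lam a b u ≠ 0) :
    HasDerivAt (gapFn a b v w) (Real.exp ((a - b) / a * u) *
      ((1 - a) * (a - b) * (a / lam a b u ^ 2 + (a - b) / a * u / lam a b u)
        + (corrSlope a b v (pre 1 u) - corrSlope a b w (pre 2 u)) / 2)) u := by
  have h1 := ((hasDerivAt_id u).const_mul ((a - b) / a)).exp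
  have h2 := ((hasDerivAt_id u).const_mul ((1 - a) * (a - b))).div (hasDerivAt_lam a b u) hu
  have h3 := (hasDerivAt_lo a b v (pre 1 u)).comp u (hasDerivAt_pre 1 u)
  have h4 := (hasDerivAt_lo a b w (pre 2 u)).comp u (hasDerivAt_pre 2 u)
  refine (h1.mul ((h2.add h3).sub h4)).congr_deriv ?_
  simp only [id, Pi.add_apply, Pi.sub_apply, Pi.div_apply, Function.comp, corrSlope]
  have e : ((1 - a) * (a - b) * 1 * lam a b u - (1 - a) * (a - b) * u * (b - a)) / lam a b u ^ 2
      = (1 - a) * (a - b) * (a / lam a b u ^ 2) := by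
    have : lam a b u - u * (b - a) = a := by unfold lam; ring
    have : (1 - a) * (a - b) * 1 * lam a b u - (1 - a) * (a - b) * u * (b - a)
      = (1 - a) * (a - b) * a := by linear_combination (1 - a) * (a - b) * this
    rw [this]; ring
  rw [e]
  ring

/-- Lower bound for the derivative of `gapFn`, up to a positive factor. -/
def slopeBound (a b u : ℝ) : ℝ :=
  (1 - a) * (4 - a) + 3 / 2 * ((a - b) * u) * (a * (2 - a) * (4 - a))
    - (a - b) * (2 - a) - (a - b) * u * (3 - 2 * a)

lemma slopeBound_le {a b : ℝ} (hb : 1 / 2 < b) (hba : b < a) (ha : a < 1) (v w : List ℕ)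
    {u : ℝ} (hu : u ∈ Icc (0:ℝ) 1) :
    (1 - a) * (a - b) * (2 * slopeBound a b u / (a * (2 - a) * (4 - a))) ≤
      (1 - a) * (a - b) * (a / lam a b u ^ 2 + (a - b) / a * u / lam a b u)
        + (corrSlope a b v (pre 1 u) - corrSlope a b w (pre 2 u)) / 2 := by
  have ha0 : 0 < a := by linarith
  have h2a : 0 < 2 - a := by linarith
  have h4a : 0 < 4 - a := by linarith
  have h43 : 0 < 4 - 3 * a := by linarith
  have hβ : 0 < a - b := by linarith
  have hb0 : 0 < b := by linarith
  have hg : 0 ≤ (1 - a) * (a - b) := mul_nonneg (by linarith) (by linarith)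
  have e1 := corrSlope_le (p := 2 / (2 - a))
    (q := 4 * (a - b) * (4 - 3 * a) / (a * (2 - a) * (4 - a))) hb0 hba ha
    (by positivity) (by positivity) (le_of_eq (by field_simp; ring))
    (le_of_eq (by field_simp; ring))
    (by
      rw [show a * (4 * (a - b) * (4 - 3 * a) / (a * (2 - a) * (4 - a))) / 4
        = (a - b) * (4 - 3 * a) / ((2 - a) * (4 - a)) by field_simp]
      rw [div_le_one (by positivity)]
      nlinarith) w _ (pre_mem 2 hu)
  have e2 := le_corrSlope (l0 := 2 * (a - b) / ((4 - a) * (2 - a)))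
    (l1 := 4 * (a - b) / (a * (4 - a))) hb0 hba ha (by positivity) (by positivity)
    (le_of_eq (by field_simp; ring)) (le_of_eq (by field_simp; ring)) v _ (pre_mem 1 hu)
  rw [pre_of_ne (i := 2) (by norm_num)] at e1 ⊢
  rw [pre_one] at e2 ⊢
  have hlam : 0 < lam a b u := hb0.trans_le (le_lam hba hu)
  have ht : 0 ≤ (a - b) * u := mul_nonneg hβ.le hu.1
  have hs : 1 / a + (a - b) * u / a ^ 2 ≤ 1 / lam a b u := by
    rw [le_div_iff₀ hlam, show lam a b u = a - (a - b) * u by unfold lam; ring]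
    have : (1 / a + (a - b) * u / a ^ 2) * (a - (a - b) * u) = 1 - ((a - b) * u / a) ^ 2 := by
      field_simp; ring
    rw [this]
    nlinarith [sq_nonneg ((a - b) * u / a)]
  have hmain : 1 / a + 3 * ((a - b) * u) ≤
      a / lam a b u ^ 2 + (a - b) / a * u / lam a b u := by
    have hs0 : 0 ≤ 1 / a + (a - b) * u / a ^ 2 := by positivity
    have h5 : 1 / a + 2 * ((a - b) * u) / a ^ 2 ≤ a / lam a b u ^ 2 := by
      have := mul_le_mul hs hs hs0 (hs0.trans hs)
      calc 1 / a + 2 * ((a - b) * u) / a ^ 2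
          ≤ 1 / a + 2 * ((a - b) * u) / a ^ 2 + a * ((a - b) * u / a ^ 2) ^ 2 := by
            have : 0 ≤ a * ((a - b) * u / a ^ 2) ^ 2 := by positivity
            linarith
        _ = a * ((1 / a + (a - b) * u / a ^ 2) * (1 / a + (a - b) * u / a ^ 2)) := by
            field_simp; ring
        _ ≤ a * (1 / lam a b u * (1 / lam a b u)) := mul_le_mul_of_nonneg_left this ha0.le
        _ = _ := by field_simp
    have h6 : (a - b) * u / a ^ 2 ≤ (a - b) / a * u / lam a b u := by
      have : 1 / a ≤ 1 / lam a b u := one_div_le_one_div_of_le hlam (lam_le hba hu)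
      calc (a - b) * u / a ^ 2 = (a - b) * u / a * (1 / a) := by field_simp
        _ ≤ (a - b) * u / a * (1 / lam a b u) := mul_le_mul_of_nonneg_left this (by positivity)
        _ = _ := by ring
    have h7 : (a - b) * u ≤ (a - b) * u / a ^ 2 := by
      rw [le_div_iff₀ (by positivity)]
      have : a ^ 2 ≤ 1 := by nlinarith
      nlinarith
    have h8 : 2 * ((a - b) * u) / a ^ 2 = 2 * ((a - b) * u / a ^ 2) := by ring
    linarith
  have hid : 2 * slopeBound a b u / (a * (2 - a) * (4 - a)) = 1 / a + 3 * ((a - b) * u)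
      - (2 * (a - b) / ((4 - a) * (2 - a)) + 4 * (a - b) / (a * (4 - a)) * (u / 2)) / 2
      - (2 / (2 - a) + 4 * (a - b) * (4 - 3 * a) / (a * (2 - a) * (4 - a)) *
        ((u + 1) / 2)) / 2 := by
    unfold slopeBound
    field_simp
    ring
  have h9 := mul_le_mul_of_nonneg_left hmain hg
  rw [hid]
  linarith

/-- The measure of the set of parameters where two strips with different newest symbols are
`m`-close is at most of order `m`. -/
lemma volume_close_le {a b u₀ d : ℝ} (hb : 1 / 2 < b) (hba : b < a) (ha : a < 1) (hd : 0 < d)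
    (hu₀ : ∀ u ∈ Icc (0:ℝ) 1, u₀ < u → d ≤ slopeBound a b u) :
    ∃ c > 0, ∀ v w : List ℕ, ∀ m ≥ 0,
      volume {u : ℝ | u ∈ Icc (0:ℝ) 1 ∧ u₀ < u ∧ |lo a b (1 :: v) u - lo a b (2 :: w) u| ≤ m}
        ≤ ENNReal.ofReal (c * m) := by
  have ha0 : 0 < a := by linarith
  have h2a : 0 < 2 - a := by linarith
  have h4a : 0 < 4 - a := by linarith
  have h1a : 0 < 1 - a := by linarith
  have hβ : 0 < a - b := by linarith
  have hb0 : 0 < b := by linarith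
  set k : ℝ := (1 - a) * (a - b) * (2 * d / (a * (2 - a) * (4 - a))) with hk
  have hk0 : 0 < k := by positivity
  set E : ℝ := Real.exp ((a - b) / a) / b with hE
  have hE0 : 0 < E := by positivity
  refine ⟨2 * E / k, by positivity, fun v w m hm => ?_⟩
  have hlam : ∀ u ∈ Icc (0:ℝ) 1, 0 < lam a b u := fun u hu => hb0.trans_le (le_lam hba hu)
  have hder : ∀ u ∈ Icc (0:ℝ) 1 ∩ Ioi u₀, k ≤ deriv (gapFn a b v w) u := by
    rintro u ⟨hu, hu1⟩
    rw [(hasDerivAt_gapFn v w (hlam u hu).ne').deriv]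
    have h1 := slopeBound_le hb hba ha v w hu
    have h2 : k ≤ (1 - a) * (a - b) * (2 * slopeBound a b u / (a * (2 - a) * (4 - a))) := by
      have := hu₀ u hu hu1
      rw [hk]; gcongr
    have h3 : 1 ≤ Real.exp ((a - b) / a * u) :=
      Real.one_le_exp (mul_nonneg (by positivity) hu.1)
    have h4 := h2.trans h1
    nlinarith
  have hconv : Convex ℝ (Icc (0:ℝ) 1 ∩ Ioi u₀) := (convex_Icc _ _).inter (convex_Ioi _)
  have hcont : ContinuousOn (gapFn a b v w) (Icc (0:ℝ) 1 ∩ Ioi u₀) := fun u hu =>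
    (hasDerivAt_gapFn v w (hlam u hu.1).ne').continuousAt.continuousWithinAt
  have hdiff : DifferentiableOn ℝ (gapFn a b v w) (interior (Icc (0:ℝ) 1 ∩ Ioi u₀)) :=
    fun u hu => (hasDerivAt_gapFn v w
      (hlam u (interior_subset hu).1).ne').differentiableAt.differentiableWithinAt
  have hmono := hconv.mul_sub_le_image_sub_of_le_deriv hcont hdiff
    (fun u hu => hder u (interior_subset hu))
  have hbound : ∀ u ∈ Icc (0:ℝ) 1, |lo a b (1 :: v) u - lo a b (2 :: w) u| ≤ m →
      |gapFn a b v w u| ≤ E * m := by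
    intro u hu h
    rw [gapFn_eq v w (hlam u hu).ne', abs_mul, abs_of_pos (div_pos (Real.exp_pos _) (hlam u hu))]
    have h1 : Real.exp ((a - b) / a * u) / lam a b u ≤ E := by
      rw [hE]
      refine div_le_div₀ (Real.exp_pos _).le ?_ hb0 (le_lam hba hu)
      exact Real.exp_le_exp.2 (mul_le_of_le_one_right (by positivity) hu.2)
    exact mul_le_mul h1 h (abs_nonneg _) hE0.le
  refine (Real.volume_le_diam _).trans (Metric.ediam_le fun x hx y hy => ?_)
  have aux : ∀ x y : ℝ, x ≤ y → x ∈ Icc (0:ℝ) 1 → u₀ < x → y ∈ Icc (0:ℝ) 1 → u₀ < y →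
      |gapFn a b v w x| ≤ E * m → |gapFn a b v w y| ≤ E * m → y - x ≤ 2 * E / k * m := by
    intro x y hxy hx hx1 hy hy1 h1 h2
    have h3 := hmono x ⟨hx, hx1⟩ y ⟨hy, hy1⟩ hxy
    have h4 := abs_le.1 h1
    have h5 := abs_le.1 h2
    have h6 : k * (y - x) ≤ 2 * E * m := by linarith [h4.1, h5.2]
    rw [div_mul_eq_mul_div, le_div_iff₀ hk0]
    linarith
  rw [edist_dist, Real.dist_eq]
  apply ENNReal.ofReal_le_ofReal
  have hx' := hbound x hx.1 hx.2.2
  have hy' := hbound y hy.1 hy.2.2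
  rcases le_total x y with h | h
  · rw [abs_sub_comm, abs_of_nonneg (sub_nonneg.2 h)]
    exact aux x y h hx.1 hx.2.1 hy.1 hy.2.1 hx' hy'
  · rw [abs_of_nonneg (sub_nonneg.2 h)]
    exact aux y x h hy.1 hy.2.1 hx.1 hx.2.1 hy' hx'

/-- Numerical form of the compatibility of the weights when `1 - a = e` is small. -/
lemma one_lt_weight_mul {e t : ℝ} (he0 : 0 < e) (he : e < 0.14) (hte : t < 1 / 2 - e) :
    0 < 2 * (1 - e - t * (0.29 - 1.5 * e)) - 1 ∧
      1 < (2 * (1 - e - t * (0.29 - 1.5 * e)) - 1) *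
        (2 * (1 - e - 2 * (t * (0.29 - 1.5 * e)))) := by
  obtain ⟨z, hz⟩ : ∃ z, z = t * (0.29 - 1.5 * e) := ⟨_, rfl⟩
  have htu : z ≤ 0.145 - 1.04 * e + 1.5 * e ^ 2 := by
    have := mul_le_mul_of_nonneg_right hte.le (show 0 ≤ 0.29 - 1.5 * e by linarith)
    rw [hz]; linarith
  rw [← hz]
  have : 0 ≤ e * (0.14 - e) := mul_nonneg he0.le (by linarith)
  have h3 : 0.71 - 0.34 * e ≤ 2 * (1 - e - z) - 1 := by linarith
  have h4 : 2 * (0.71 + 0.66 * e) ≤ 2 * (1 - e - 2 * z) := by linarith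
  have h5 : 0 ≤ 0.71 - 0.34 * e := by linarith
  refine ⟨by linarith, lt_of_lt_of_le ?_ (mul_le_mul h3 h4 (by linarith) (by linarith))⟩
  linarith

/-- Numerical form of the transversality bound when `1 - a = e` is small. -/
lemma le_slopeBound_small {e t u : ℝ} (he0 : 0 < e) (he : e < 0.14) (ht0 : 0 < t)
    (hte : t < 1 / 2 - e) (hu0 : 0 ≤ u) (h : 0.29 - 1.5 * e < u) :
    0.003 * t ≤ e * (3 + e)
      + t * u * (3 / 2 * ((1 - e) * (1 + e) * (3 + e)) - (1 + 2 * e)) - t * (1 + e) := by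
  have hcub : 3 ≤ (1 - e) * (1 + e) * (3 + e) := by
    have : 0 ≤ e * (1 - 3 * e - e ^ 2) := mul_nonneg he0.le (by nlinarith)
    linarith
  have h1 : 3.5 - 2 * e ≤ 3 / 2 * ((1 - e) * (1 + e) * (3 + e)) - (1 + 2 * e) := by linarith
  have h2 : t * (0.29 - 1.5 * e) * (3.5 - 2 * e) ≤
      t * u * (3 / 2 * ((1 - e) * (1 + e) * (3 + e)) - (1 + 2 * e)) :=
    mul_le_mul (mul_le_mul_of_nonneg_left h.le ht0.le) h1 (by linarith) (mul_nonneg ht0.le hu0)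
  have h3 : t * (6 * e + 12 * e ^ 2) ≤ 3 * e := by
    have := mul_le_mul_of_nonneg_right hte.le (show 0 ≤ 6 * e + 12 * e ^ 2 by positivity)
    have : 0 ≤ e ^ 3 := by positivity
    linarith
  have h4 : 0.003 ≤ 6 * e + 12 * e ^ 2 + (0.29 - 1.5 * e) * (3.5 - 2 * e) - (1 + e) := by
    linarith [sq_nonneg (e - 0.0277)]
  have h5 := mul_le_mul_of_nonneg_left h4 ht0.le
  linarith [sq_nonneg e]

/-- Weights for the energy estimate: below `u₀` the two branches are compared by Young's
inequality, above `u₀` they are transversal. -/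
lemma exists_weights {a b : ℝ} (hb : 1 / 2 < b) (hba : b < a) (ha : a < 1) :
    ∃ u₀ R κ d : ℝ, u₀ < 1 / 2 ∧ 1 ≤ R ∧ 0 < κ ∧ κ < 1 ∧ 0 < d ∧
      (∀ u ∈ Icc (0:ℝ) 1, u ≤ u₀ → 1 + 1 / R ≤ 2 * κ * lam a b u) ∧
      (∀ u ∈ Icc (0:ℝ) 1, u / 2 ≤ u₀ → R ≤ 2 * κ * lam a b u) ∧
      (∀ u ∈ Icc (0:ℝ) 1, 1 ≤ 2 * κ * lam a b u) ∧
      (∀ u ∈ Icc (0:ℝ) 1, u₀ < u → d ≤ slopeBound a b u) := by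
  have hb0 : 0 < b := by linarith
  have hβ : 0 < a - b := by linarith
  obtain ⟨e, he⟩ : ∃ e, e = 1 - a := ⟨_, rfl⟩
  obtain ⟨t, ht⟩ : ∃ t, t = a - b := ⟨_, rfl⟩
  have hae : a = 1 - e := by linarith
  have hbe : b = 1 - e - t := by linarith
  have he0 : 0 < e := by linarith
  have ht0 : 0 < t := by linarith
  have hte : t < 1 / 2 - e := by linarith
  have hsb : ∀ u, slopeBound a b u = e * (3 + e)
      + t * u * (3 / 2 * ((1 - e) * (1 + e) * (3 + e)) - (1 + 2 * e)) - t * (1 + e) := by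
    intro u; rw [slopeBound, hbe, hae]; ring
  have hlamb : ∀ u ∈ Icc (0:ℝ) 1, 1 ≤ 2 * (1 / (2 * b)) * lam a b u := by
    intro u hu
    have h1 := le_lam hba hu
    rw [show 2 * (1 / (2 * b)) * lam a b u = lam a b u / b by field_simp, le_div_iff₀ hb0]
    linarith
  have hκb : 1 / (2 * b) < 1 := by rw [div_lt_one (by linarith)]; linarith
  by_cases hcase : 0.14 ≤ e
  · refine ⟨-1, 1, 1 / (2 * b), 0.029, by norm_num, le_rfl, by positivity, hκb, by norm_num,
      fun u hu h => absurd hu.1 (by linarith), fun u hu h => absurd hu.1 (by linarith),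
      hlamb, fun u hu _ => ?_⟩
    rw [hsb]
    have h1 : 0 ≤ 3 / 2 * ((1 - e) * (1 + e) * (3 + e)) - (1 + 2 * e) := by
      have : 3 / 4 ≤ (1 - e) * (1 + e) := by nlinarith
      nlinarith
    have h2 := mul_nonneg (mul_nonneg ht0.le hu.1) h1
    nlinarith
  · push Not at hcase
    obtain ⟨hX1pos, hprod⟩ := one_lt_weight_mul he0 hcase hte
    set u₀ : ℝ := 0.29 - 1.5 * e with hu₀
    have hu₀0 : 0 < u₀ := by rw [hu₀]; linarith
    have hl1 : 1 - e - t * u₀ = lam a b u₀ := by rw [lam, hbe, hae]; ring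
    have hl2 : 1 - e - 2 * (t * u₀) = lam a b (2 * u₀) := by rw [lam, hbe, hae]; ring
    have hX1lt : 2 * lam a b u₀ - 1 < 1 := by
      rw [← hl1]; linarith [mul_pos ht0 hu₀0]
    rw [hl1] at hX1pos hprod
    rw [hl2] at hprod
    have hlt : 1 / (2 * lam a b u₀ - 1) < 2 * lam a b (2 * u₀) := by
      rw [div_lt_iff₀ hX1pos]; linarith
    obtain ⟨R, hR1, hR2⟩ := exists_between hlt
    have hone : 1 < 1 / (2 * lam a b u₀ - 1) := by rw [lt_div_iff₀ hX1pos]; linarith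
    have hR : 1 < R := hone.trans hR1
    have hlam1 : 0 < lam a b u₀ := by linarith
    have hlam2 : 0 < lam a b (2 * u₀) := by linarith [one_pos.trans (hone.trans hlt)]
    have hRinv : 1 + 1 / R < 2 * lam a b u₀ := by
      have h1 : 1 / R < 2 * lam a b u₀ - 1 := by
        rw [div_lt_iff₀ (by linarith)]
        rw [div_lt_iff₀ hX1pos] at hR1
        linarith
      linarith
    have hanti : ∀ u v, u ≤ v → lam a b v ≤ lam a b u := by
      intro u v huv
      unfold lam
      nlinarith
    obtain ⟨κ, hκ, hκ1⟩ : ∃ κ, max (max ((1 + 1 / R) / (2 * lam a b u₀))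
        (R / (2 * lam a b (2 * u₀)))) (1 / (2 * b)) = κ ∧ κ < 1 := by
      refine ⟨_, rfl, max_lt (max_lt ?_ ?_) hκb⟩
      · rw [div_lt_one (by linarith)]; exact hRinv
      · rw [div_lt_one (by linarith)]; exact hR2
    have hκa : (1 + 1 / R) / (2 * lam a b u₀) ≤ κ :=
      hκ ▸ (le_max_left _ _).trans (le_max_left _ _)
    have hκb' : R / (2 * lam a b (2 * u₀)) ≤ κ :=
      hκ ▸ (le_max_right _ _).trans (le_max_left _ _)
    have hκc : 1 / (2 * b) ≤ κ := hκ ▸ le_max_right _ _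
    have hκ0 : 0 < κ := lt_of_lt_of_le (by positivity) hκc
    refine ⟨u₀, R, κ, 0.003 * t, by rw [hu₀]; linarith, hR.le, hκ0, hκ1, by positivity,
      fun u hu h => ?_, fun u hu h => ?_, fun u hu => ?_, fun u hu h => ?_⟩
    · rw [div_le_iff₀ (by linarith)] at hκa
      have := mul_le_mul_of_nonneg_left (hanti u u₀ h) hκ0.le
      linarith
    · rw [div_le_iff₀ (by linarith)] at hκb'
      have := mul_le_mul_of_nonneg_left (hanti u (2 * u₀) (by linarith)) hκ0.le
      linarith
    · have h1 := hlamb u hu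
      have h2 : 0 < lam a b u := hb0.trans_le (le_lam hba hu)
      have := mul_le_mul_of_nonneg_right hκc h2.le
      linarith
    · rw [hsb]
      exact le_slopeBound_small he0 hcase ht0 hte hu.1 h

/-! ### The energy of the slices -/

/-- The words of length `n` over the alphabet `{1,2}`. -/
def words : ℕ → Finset (List ℕ)
  | 0 => {[]}
  | n + 1 => (words n).image (List.cons 1) ∪ (words n).image (List.cons 2)

lemma mem_words {n : ℕ} {v : List ℕ} :
    v ∈ words n ↔ v.length = n ∧ ∀ i ∈ v, i = 1 ∨ i = 2 := by
  induction n generalizing v with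
  | zero =>
    simp only [words, Finset.mem_singleton, List.length_eq_zero_iff]
    constructor
    · rintro rfl; simp
    · exact fun h => h.1
  | succ n ih =>
    simp only [words, Finset.mem_union, Finset.mem_image]
    constructor
    · rintro (⟨w, hw, rfl⟩ | ⟨w, hw, rfl⟩) <;>
      · obtain ⟨h1, h2⟩ := ih.1 hw
        simpa [h1] using h2
    · rintro ⟨h1, h2⟩
      match v, h1, h2 with
      | i :: w, h1, h2 =>
        have hw : w ∈ words n :=
          ih.2 ⟨by simpa using h1, fun j hj => h2 j (List.mem_cons_of_mem _ hj)⟩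
        rcases h2 i List.mem_cons_self with rfl | rfl
        · exact Or.inl ⟨w, hw, rfl⟩
        · exact Or.inr ⟨w, hw, rfl⟩

lemma sum_words_succ {M : Type*} [AddCommMonoid M] (n : ℕ) (φ : List ℕ → M) :
    ∑ v ∈ words (n + 1), φ v = ∑ v ∈ words n, φ (1 :: v) + ∑ v ∈ words n, φ (2 :: v) := by
  rw [words, Finset.sum_union, Finset.sum_image, Finset.sum_image]
  · exact fun _ _ _ _ h => (List.cons.inj h).2
  · exact fun _ _ _ _ h => (List.cons.inj h).2
  · rw [Finset.disjoint_left]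
    intro v h1 h2
    obtain ⟨w, _, rfl⟩ := Finset.mem_image.1 h1
    obtain ⟨w', _, h⟩ := Finset.mem_image.1 h2
    exact absurd (List.cons.inj h).1 (by norm_num)

lemma card_words (n : ℕ) : (words n).card = 2 ^ n := by
  induction n with
  | zero => rfl
  | succ n ih => rw [Finset.card_eq_sum_ones, sum_words_succ, ← Finset.card_eq_sum_ones, ih]; ring

/-- The vertical slice of a strip. -/
def slice (a b : ℝ) (v : List ℕ) (x : ℝ) : Set ℝ :=
  Icc (lo a b v x) (lo a b v x + height a b v x)

/-- The average over the words of length `n` of the normalised Lebesgue measures on slices. -/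
def density (a b : ℝ) (n : ℕ) (x z : ℝ) : ℝ :=
  ∑ v ∈ words n, (2 ^ n * height a b v x)⁻¹ * (slice a b v x).indicator 1 z

/-- The contribution to `density` of the words with newest symbol `i`. -/
def branchDensity (a b : ℝ) (n i : ℕ) (x z : ℝ) : ℝ :=
  ∑ v ∈ words n, (2 ^ (n + 1) * height a b (i :: v) x)⁻¹ *
    (slice a b (i :: v) x).indicator 1 z

/-- The squared `L²`-norm of `density`. -/
def energy (a b : ℝ) (n : ℕ) (x : ℝ) : ℝ≥0∞ := ∫⁻ z, ENNReal.ofReal (density a b n x z ^ 2)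

lemma density_succ (a b : ℝ) (n : ℕ) (x z : ℝ) :
    density a b (n + 1) x z = branchDensity a b n 1 x z + branchDensity a b n 2 x z :=
  sum_words_succ _ _

lemma measurableSet_slice (a b : ℝ) (v : List ℕ) :
    MeasurableSet {p : ℝ × ℝ | p.2 ∈ slice a b v p.1} := by
  have h1 := continuous_lo a b v
  have h2 := continuous_height a b v
  have h3 : IsClosed {p : ℝ × ℝ | lo a b v p.1 ≤ p.2} := isClosed_le (by fun_prop) (by fun_prop)
  have h4 : IsClosed {p : ℝ × ℝ | p.2 ≤ lo a b v p.1 + height a b v p.1} :=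
    isClosed_le (by fun_prop) (by fun_prop)
  exact (h3.inter h4).measurableSet

lemma measurable_slice_indicator (a b : ℝ) (v : List ℕ) :
    Measurable fun p : ℝ × ℝ => (slice a b v p.1).indicator (1 : ℝ → ℝ) p.2 :=
  (measurable_const (a := (1:ℝ))).indicator (measurableSet_slice a b v)

lemma measurable_density (a b : ℝ) (n : ℕ) :
    Measurable fun p : ℝ × ℝ => density a b n p.1 p.2 := by
  unfold density
  refine Finset.measurable_sum _ fun v _ => ?_
  have := (continuous_height a b v).measurable
  exact (((this.comp measurable_fst).const_mul _).inv).mul (measurable_slice_indicator a b v)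

lemma measurable_branchDensity (a b : ℝ) (n i : ℕ) (x : ℝ) :
    Measurable (branchDensity a b n i x) := by
  unfold branchDensity
  refine Finset.measurable_sum _ fun v _ => ?_
  exact ((measurable_slice_indicator a b (i :: v)).comp measurable_prodMk_left).const_mul _

lemma measurable_energy (a b : ℝ) (n : ℕ) : Measurable (energy a b n) :=
  Measurable.lintegral_prod_right
    (f := fun x z => ENNReal.ofReal (density a b n x z ^ 2))
    ((measurable_density a b n).pow_const 2).ennreal_ofReal

section Energy

variable {a b : ℝ}

lemma density_nonneg (hb : 0 < b) (hba : b < a) (n : ℕ) {x : ℝ} (hx : x ∈ Icc (0:ℝ) 1) (z : ℝ) :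
    0 ≤ density a b n x z :=
  Finset.sum_nonneg fun v _ => mul_nonneg
    (inv_nonneg.2 (mul_nonneg (by positivity) (height_pos hb hba v x hx).le))
    (indicator_nonneg (fun _ _ => zero_le_one) _)

lemma branchDensity_nonneg (hb : 0 < b) (hba : b < a) (n i : ℕ) {x : ℝ}
    (hx : x ∈ Icc (0:ℝ) 1) (z : ℝ) : 0 ≤ branchDensity a b n i x z :=
  Finset.sum_nonneg fun v _ => mul_nonneg
    (inv_nonneg.2 (mul_nonneg (by positivity) (height_pos hb hba (i :: v) x hx).le))
    (indicator_nonneg (fun _ _ => zero_le_one) _)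

lemma mem_slice_cons {x : ℝ} (hl : 0 < lam a b x) (i : ℕ) (v : List ℕ) (z : ℝ) :
    lam a b x * z + offSlope a b i * x ∈ slice a b (i :: v) x ↔ z ∈ slice a b v (pre i x) := by
  simp only [slice, mem_Icc, lo, height]
  rw [← mul_le_mul_iff_right₀ hl (b := lo a b v (pre i x)),
    ← mul_le_mul_iff_right₀ hl (b := z), mul_add]
  constructor <;> rintro ⟨h1, h2⟩ <;> constructor <;> linarith

lemma branchDensity_eq (hb : 0 < b) (hba : b < a) (n i : ℕ) {x : ℝ} (hx : x ∈ Icc (0:ℝ) 1)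
    (z : ℝ) : branchDensity a b n i x (lam a b x * z + offSlope a b i * x) =
      (2 * lam a b x)⁻¹ * density a b n (pre i x) z := by
  have hl : 0 < lam a b x := hb.trans_le (le_lam hba hx)
  rw [branchDensity, density, Finset.mul_sum]
  refine Finset.sum_congr rfl fun v _ => ?_
  have : (slice a b (i :: v) x).indicator (1 : ℝ → ℝ) (lam a b x * z + offSlope a b i * x) =
      (slice a b v (pre i x)).indicator 1 z := by
    have := mem_slice_cons hl i v z
    by_cases h : z ∈ slice a b v (pre i x)
    · rw [indicator_of_mem h, indicator_of_mem (this.2 h)]; rfl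
    · rw [indicator_of_notMem h, indicator_of_notMem (mt this.1 h)]
  rw [this, height, pow_succ]
  have h2 := (height_pos hb hba v _ (pre_mem i hx)).ne'
  field_simp

lemma lintegral_branchDensity_sq (hb : 0 < b) (hba : b < a) (n i : ℕ) {x : ℝ}
    (hx : x ∈ Icc (0:ℝ) 1) :
    ∫⁻ z, ENNReal.ofReal (branchDensity a b n i x z ^ 2) =
      ENNReal.ofReal (4 * lam a b x)⁻¹ * energy a b n (pre i x) := by
  have hl : 0 < lam a b x := hb.trans_le (le_lam hba hx)
  have himg : (fun z => lam a b x * z + offSlope a b i * x) '' univ = univ := by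
    rw [image_univ]
    refine Function.Surjective.range_eq fun y => ⟨(y - offSlope a b i * x) / lam a b x, ?_⟩
    field_simp; ring
  have h := lintegral_image_eq_lintegral_abs_deriv_mul (f' := fun _ => lam a b x)
    (f := fun z => lam a b x * z + offSlope a b i * x) (s := univ) MeasurableSet.univ
    (fun z _ => by
      exact ((((hasDerivAt_id z).const_mul (lam a b x)).add_const
        (offSlope a b i * x)).congr_deriv (mul_one _)).hasDerivWithinAt)
    (fun y _ z _ h => by simpa [hl.ne'] using h)
    (fun z => ENNReal.ofReal (branchDensity a b n i x z ^ 2))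
  rw [himg] at h
  simp only [Measure.restrict_univ] at h
  rw [h, energy, ← lintegral_const_mul' _ _ ENNReal.ofReal_ne_top]
  refine lintegral_congr fun z => ?_
  rw [branchDensity_eq hb hba n i hx, ← ENNReal.ofReal_mul (abs_nonneg _),
    ← ENNReal.ofReal_mul (by positivity), abs_of_pos hl]
  congr 1
  field_simp
  ring

lemma energy_succ_le (hb : 0 < b) (hba : b < a) (n : ℕ) {x α β c : ℝ}
    (hx : x ∈ Icc (0:ℝ) 1) (hα : 0 ≤ α) (hβ : 0 ≤ β) (hc : 0 ≤ c)
    (h : ∀ p q : ℝ, 0 ≤ p → 0 ≤ q → (p + q) ^ 2 ≤ α * p ^ 2 + β * q ^ 2 + c * (p * q)) :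
    energy a b (n + 1) x ≤ ENNReal.ofReal (α / (4 * lam a b x)) * energy a b n (pre 1 x)
      + ENNReal.ofReal (β / (4 * lam a b x)) * energy a b n (pre 2 x)
      + ENNReal.ofReal c * ∫⁻ z, ENNReal.ofReal
          (branchDensity a b n 1 x z * branchDensity a b n 2 x z) := by
  have m1 := measurable_branchDensity a b n 1 x
  have m2 := measurable_branchDensity a b n 2 x
  calc energy a b (n + 1) x
      ≤ ∫⁻ z, (ENNReal.ofReal α * ENNReal.ofReal (branchDensity a b n 1 x z ^ 2)
        + ENNReal.ofReal β * ENNReal.ofReal (branchDensity a b n 2 x z ^ 2)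
        + ENNReal.ofReal c * ENNReal.ofReal
          (branchDensity a b n 1 x z * branchDensity a b n 2 x z)) := by
        refine lintegral_mono fun z => ?_
        have h1 := branchDensity_nonneg hb hba n 1 hx z
        have h2 := branchDensity_nonneg hb hba n 2 hx z
        rw [← ENNReal.ofReal_mul hα, ← ENNReal.ofReal_mul hβ, ← ENNReal.ofReal_mul hc,
          ← ENNReal.ofReal_add (by positivity) (by positivity),
          ← ENNReal.ofReal_add (by positivity) (by positivity), density_succ]
        exact ENNReal.ofReal_le_ofReal (h _ _ h1 h2)
    _ = _ := by
        rw [lintegral_add_left (by fun_prop), lintegral_add_left (by fun_prop),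
          lintegral_const_mul' _ _ ENNReal.ofReal_ne_top,
          lintegral_const_mul' _ _ ENNReal.ofReal_ne_top,
          lintegral_const_mul' _ _ ENNReal.ofReal_ne_top,
          lintegral_branchDensity_sq hb hba n 1 hx, lintegral_branchDensity_sq hb hba n 2 hx,
          ← mul_assoc, ← mul_assoc, ← ENNReal.ofReal_mul hα, ← ENNReal.ofReal_mul hβ,
          div_eq_mul_inv, div_eq_mul_inv]

/-- Overlap of two slices, in terms of the distance of their lower ends. -/
lemma volume_slice_inter_le {l₁ l₂ h₁ h₂ m k : ℝ} (h1 : 0 < h₁) (h2 : 0 < h₂) (hm : 0 < m)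
    (hle : max h₁ h₂ ≤ m) (hge : m ≤ k * max h₁ h₂) :
    ENNReal.ofReal (h₁⁻¹ * h₂⁻¹) * volume (Icc l₁ (l₁ + h₁) ∩ Icc l₂ (l₂ + h₂)) ≤
      ENNReal.ofReal (k / m) * if |l₁ - l₂| ≤ m then 1 else 0 := by
  by_cases hd : |l₁ - l₂| ≤ m
  · rw [if_pos hd, mul_one]
    have hv : volume (Icc l₁ (l₁ + h₁) ∩ Icc l₂ (l₂ + h₂)) ≤ ENNReal.ofReal (min h₁ h₂) := by
      rcases le_total h₁ h₂ with h | h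
      · rw [min_eq_left h]
        refine (measure_mono inter_subset_left).trans ?_
        rw [Real.volume_Icc, add_sub_cancel_left]
      · rw [min_eq_right h]
        refine (measure_mono inter_subset_right).trans ?_
        rw [Real.volume_Icc, add_sub_cancel_left]
    refine (mul_le_mul_right hv _).trans ?_
    rw [← ENNReal.ofReal_mul (by positivity)]
    apply ENNReal.ofReal_le_ofReal
    have hmm := min_mul_max h₁ h₂
    have hmax : 0 < max h₁ h₂ := lt_max_of_lt_left h1
    have : h₁⁻¹ * h₂⁻¹ * min h₁ h₂ = (max h₁ h₂)⁻¹ := by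
      field_simp
      linarith
    rw [this, le_div_iff₀ hm, inv_mul_le_iff₀ hmax]
    linarith
  · have : Icc l₁ (l₁ + h₁) ∩ Icc l₂ (l₂ + h₂) = ∅ := by
      rw [eq_empty_iff_forall_notMem]
      rintro z ⟨hz1, hz2⟩
      apply hd
      have := le_max_left h₁ h₂
      have := le_max_right h₁ h₂
      rw [abs_le]
      constructor <;> linarith [hz1.1, hz1.2, hz2.1, hz2.2]
    rw [this, measure_empty, mul_zero]
    exact zero_le

lemma lintegral_branchDensity_mul (hb : 0 < b) (hba : b < a) (n : ℕ) {x : ℝ}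
    (hx : x ∈ Icc (0:ℝ) 1) :
    ∫⁻ z, ENNReal.ofReal (branchDensity a b n 1 x z * branchDensity a b n 2 x z) =
      ∑ v ∈ words n, ∑ w ∈ words n, ENNReal.ofReal ((1 / 4) ^ (n + 1)) *
        (ENNReal.ofReal ((height a b (1 :: v) x)⁻¹ * (height a b (2 :: w) x)⁻¹) *
          volume (slice a b (1 :: v) x ∩ slice a b (2 :: w) x)) := by
  have hpos := fun v : List ℕ => height_pos hb hba v x hx
  have hI : ∀ v w : List ℕ, MeasurableSet (slice a b v x ∩ slice a b w x) := fun v w =>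
    measurableSet_Icc.inter measurableSet_Icc
  calc _ = ∫⁻ z, ∑ v ∈ words n, ∑ w ∈ words n, ENNReal.ofReal ((1 / 4) ^ (n + 1)) *
        (ENNReal.ofReal ((height a b (1 :: v) x)⁻¹ * (height a b (2 :: w) x)⁻¹) *
          (slice a b (1 :: v) x ∩ slice a b (2 :: w) x).indicator 1 z) := by
        refine lintegral_congr fun z => ?_
        rw [branchDensity, branchDensity, Finset.sum_mul_sum,
          ENNReal.ofReal_sum_of_nonneg]
        swap
        · refine fun v _ => Finset.sum_nonneg fun w _ => ?_
          have h1 := hpos (1 :: v)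
          have h2 := hpos (2 :: w)
          refine mul_nonneg (mul_nonneg (by positivity) ?_) (mul_nonneg (by positivity) ?_) <;>
          exact indicator_nonneg (fun _ _ => zero_le_one) _
        refine Finset.sum_congr rfl fun v _ => ?_
        rw [ENNReal.ofReal_sum_of_nonneg]
        swap
        · refine fun w _ => ?_
          have h1 := hpos (1 :: v)
          have h2 := hpos (2 :: w)
          refine mul_nonneg (mul_nonneg (by positivity) ?_) (mul_nonneg (by positivity) ?_) <;>
          exact indicator_nonneg (fun _ _ => zero_le_one) _
        refine Finset.sum_congr rfl fun w _ => ?_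
        have h1 := hpos (1 :: v)
        have h2 := hpos (2 :: w)
        by_cases hz1 : z ∈ slice a b (1 :: v) x
        · by_cases hz2 : z ∈ slice a b (2 :: w) x
          · rw [indicator_of_mem hz1, indicator_of_mem hz2, indicator_of_mem (mem_inter hz1 hz2)]
            simp only [Pi.one_apply, mul_one]
            rw [← ENNReal.ofReal_mul (by positivity)]
            congr 1
            rw [mul_inv, mul_inv, one_div, inv_pow,
              show (4:ℝ) ^ (n + 1) = 2 ^ (n + 1) * 2 ^ (n + 1) by
                rw [← mul_pow]; norm_num, mul_inv]
            ring
          · rw [indicator_of_notMem hz2, indicator_of_notMem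
              (s := slice a b (1 :: v) x ∩ slice a b (2 :: w) x) (fun h => hz2 h.2)]
            simp only [mul_zero, ENNReal.ofReal_zero]
        · rw [indicator_of_notMem hz1, indicator_of_notMem
            (s := slice a b (1 :: v) x ∩ slice a b (2 :: w) x) (fun h => hz1 h.1)]
          simp only [mul_zero, zero_mul, ENNReal.ofReal_zero]
    _ = _ := by
        have hm : ∀ v w : List ℕ, Measurable fun z => ENNReal.ofReal ((1 / 4) ^ (n + 1)) *
            (ENNReal.ofReal ((height a b (1 :: v) x)⁻¹ * (height a b (2 :: w) x)⁻¹) *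
            (slice a b (1 :: v) x ∩ slice a b (2 :: w) x).indicator (1 : ℝ → ℝ≥0∞) z) :=
          fun v w => ((measurable_one.indicator (hI _ _)).const_mul _).const_mul _
        rw [lintegral_finsetSum _ fun v _ => Finset.measurable_sum _ fun w _ => hm v w]
        refine Finset.sum_congr rfl fun v _ => ?_
        rw [lintegral_finsetSum _ fun w _ => hm v w]
        refine Finset.sum_congr rfl fun w _ => ?_
        rw [lintegral_const_mul' _ _ ENNReal.ofReal_ne_top,
          lintegral_const_mul' _ _ ENNReal.ofReal_ne_top, lintegral_indicator_one (hI _ _)]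

/-- The interaction of the two branches is bounded above `u₀`. -/
lemma lintegral_cross_le (hb : 0 < b) (hba : b < a) {u₀ c : ℝ} (hc : 0 < c)
    (hclose : ∀ v w : List ℕ, ∀ m ≥ 0,
      volume {u : ℝ | u ∈ Icc (0:ℝ) 1 ∧ u₀ < u ∧ |lo a b (1 :: v) u - lo a b (2 :: w) u| ≤ m}
        ≤ ENNReal.ofReal (c * m)) (n : ℕ) :
    ∃ X : ℝ → ℝ≥0∞, Measurable X ∧
      (∀ u ∈ Icc (0:ℝ) 1, u₀ < u → ∫⁻ z, ENNReal.ofReal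
        (branchDensity a b n 1 u z * branchDensity a b n 2 u z) ≤ X u) ∧
      ∫⁻ u, X u ≤ ENNReal.ofReal (Real.exp (2 * ((a - b) / b)) * c) := by
  set k := Real.exp (2 * ((a - b) / b))
  have hk0 : 0 < k := Real.exp_pos _
  have h0 : (0:ℝ) ∈ Icc (0:ℝ) 1 := ⟨le_rfl, zero_le_one⟩
  let m : List ℕ → List ℕ → ℝ := fun v w => max (height a b (1 :: v) 0) (height a b (2 :: w) 0)
  have hm0 : ∀ v w, 0 < m v w := fun v w => lt_max_of_lt_left (height_pos hb hba _ _ h0)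
  let T : List ℕ → List ℕ → Set ℝ := fun v w =>
    {u : ℝ | u ∈ Icc (0:ℝ) 1 ∧ u₀ < u ∧ |lo a b (1 :: v) u - lo a b (2 :: w) u| ≤ m v w}
  have hT : ∀ v w, MeasurableSet (T v w) := by
    intro v w
    have h1 := continuous_lo a b (1 :: v)
    have h2 := continuous_lo a b (2 :: w)
    have h3 : IsClosed {u : ℝ | |lo a b (1 :: v) u - lo a b (2 :: w) u| ≤ m v w} :=
      isClosed_le (by fun_prop) (by fun_prop)
    exact measurableSet_Icc.inter (measurableSet_Ioi.inter h3.measurableSet)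
  have hmeas : ∀ v w, Measurable fun u => ENNReal.ofReal ((1 / 4) ^ (n + 1)) *
      (ENNReal.ofReal (k / m v w) * (T v w).indicator (1 : ℝ → ℝ≥0∞) u) :=
    fun v w => ((measurable_one.indicator (hT v w)).const_mul _).const_mul _
  refine ⟨fun u => ∑ v ∈ words n, ∑ w ∈ words n, ENNReal.ofReal ((1 / 4) ^ (n + 1)) *
    (ENNReal.ofReal (k / m v w) * (T v w).indicator 1 u),
    Finset.measurable_sum _ fun v _ => Finset.measurable_sum _ fun w _ => hmeas v w, ?_, ?_⟩
  · intro u hu hu1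
    rw [lintegral_branchDensity_mul hb hba n hu]
    refine Finset.sum_le_sum fun v _ => Finset.sum_le_sum fun w _ => ?_
    refine mul_le_mul_right ?_ _
    have hanti : ∀ v, height a b v u ≤ height a b v 0 := fun v =>
      height_antitone hb hba v 0 h0 u hu hu.1
    have hdist : ∀ v, height a b v 0 ≤ k * height a b v u := by
      intro v
      refine (height_distortion hb hba v 0 h0 u hu).trans ?_
      refine mul_le_mul_of_nonneg_right ?_ (height_pos hb hba v u hu).le
      refine Real.exp_le_exp.2 (mul_le_of_le_one_right ?_ ?_)
      · have : 0 < a - b := by linarith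
        positivity
      · rw [zero_sub, abs_neg, abs_of_nonneg hu.1]; exact hu.2
    refine (volume_slice_inter_le (k := k) (height_pos hb hba _ u hu) (height_pos hb hba _ u hu)
      (hm0 v w)
      (max_le_max (hanti _) (hanti _)) ?_).trans ?_
    · refine max_le ((hdist _).trans ?_) ((hdist _).trans ?_)
      · exact mul_le_mul_of_nonneg_left (le_max_left _ _) hk0.le
      · exact mul_le_mul_of_nonneg_left (le_max_right _ _) hk0.le
    · refine mul_le_mul_right ?_ _
      by_cases hd : |lo a b (1 :: v) u - lo a b (2 :: w) u| ≤ m v w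
      · rw [if_pos hd, indicator_of_mem (show u ∈ T v w from ⟨hu, hu1, hd⟩)]; rfl
      · rw [if_neg hd]; exact zero_le
  · rw [lintegral_finsetSum _ fun v _ => Finset.measurable_sum _ fun w _ => hmeas v w]
    have hterm : ∀ v w, ∫⁻ u, ENNReal.ofReal ((1 / 4) ^ (n + 1)) *
        (ENNReal.ofReal (k / m v w) * (T v w).indicator (1 : ℝ → ℝ≥0∞) u) ≤
        ENNReal.ofReal ((1 / 4) ^ (n + 1) * (k * c)) := by
      intro v w
      rw [lintegral_const_mul' _ _ ENNReal.ofReal_ne_top,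
          lintegral_const_mul' _ _ ENNReal.ofReal_ne_top, lintegral_indicator_one (hT v w)]
      refine (mul_le_mul_right (mul_le_mul_right (hclose v w (m v w) (hm0 v w).le) _) _).trans ?_
      have := hm0 v w
      rw [← ENNReal.ofReal_mul (by positivity), ← ENNReal.ofReal_mul (by positivity)]
      refine ENNReal.ofReal_le_ofReal (le_of_eq ?_)
      field_simp
    calc _ ≤ ∑ v ∈ words n, ∑ w ∈ words n, ENNReal.ofReal ((1 / 4) ^ (n + 1) * (k * c)) := by
          refine Finset.sum_le_sum fun v _ => ?_
          rw [lintegral_finsetSum _ fun w _ => hmeas v w]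
          exact Finset.sum_le_sum fun w _ => hterm v w
      _ = ENNReal.ofReal (2 ^ n * (2 ^ n * ((1 / 4) ^ (n + 1) * (k * c)))) := by
          rw [Finset.sum_const, Finset.sum_const, card_words, nsmul_eq_mul, nsmul_eq_mul]
          generalize (1 / 4) ^ (n + 1) * (k * c) = y
          rw [ENNReal.ofReal_mul (p := 2 ^ n) (by positivity),
            ENNReal.ofReal_mul (p := 2 ^ n) (by positivity),
            ENNReal.ofReal_pow (by norm_num)]
          simp only [Nat.cast_pow, Nat.cast_ofNat, ENNReal.ofReal_ofNat]
      _ ≤ _ := by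
          refine ENNReal.ofReal_le_ofReal ?_
          have : (2:ℝ) ^ n * (2 ^ n * ((1 / 4) ^ (n + 1) * (k * c))) = k * c / 4 := by
            have : (2:ℝ) ^ n * 2 ^ n * (1 / 4) ^ n = 1 := by
              rw [← mul_pow, ← mul_pow]; norm_num
            rw [pow_succ]
            linear_combination (k * c / 4) * this
          rw [this]
          have : 0 < k * c := by positivity
          linarith

lemma lintegral_comp_pre (i : ℕ) (s : Set ℝ) (hs : MeasurableSet s) (G : ℝ → ℝ≥0∞) :
    ∫⁻ u in s, G (pre i u) = 2 * ∫⁻ u in pre i '' s, G u := by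
  have hinj : Function.Injective (pre i) := by
    intro x y h
    by_cases hi : i = 1
    · subst hi; simp only [pre_one] at h; linarith
    · simp only [pre_of_ne hi] at h; linarith
  rw [lintegral_image_eq_lintegral_abs_deriv_mul hs
    (fun x _ => (hasDerivAt_pre i x).hasDerivWithinAt) hinj.injOn,
    lintegral_const_mul' _ _ ENNReal.ofReal_ne_top, ← mul_assoc,
    ← ENNReal.ofReal_ofNat 2, ← ENNReal.ofReal_mul (by norm_num)]
  norm_num

lemma lintegral_comp_pre_add {G : ℝ → ℝ≥0∞} (hG : Measurable G) :
    ∫⁻ u in Ioc (0:ℝ) 1, (G (pre 1 u) + G (pre 2 u)) = 2 * ∫⁻ u in Ioc (0:ℝ) 1, G u := by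
  have h1 : pre 1 '' Ioc (0:ℝ) 1 = Ioc 0 (1 / 2) := by
    ext y
    simp only [mem_image, mem_Ioc, pre_one]
    exact ⟨by rintro ⟨x, hx, rfl⟩; constructor <;> linarith,
      fun h => ⟨2 * y, by constructor <;> linarith, by ring⟩⟩
  have h2 : pre 2 '' Ioc (0:ℝ) 1 = Ioc (1 / 2) 1 := by
    ext y
    simp only [mem_image, mem_Ioc, pre_of_ne (show (2:ℕ) ≠ 1 by norm_num)]
    exact ⟨by rintro ⟨x, hx, rfl⟩; constructor <;> linarith,
      fun h => ⟨2 * y - 1, by constructor <;> linarith, by ring⟩⟩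
  rw [lintegral_add_left (show Measurable fun u => G (pre 1 u) from
      hG.comp (continuous_pre 1).measurable),
    lintegral_comp_pre 1 _ measurableSet_Ioc, lintegral_comp_pre 2 _ measurableSet_Ioc, h1, h2,
    ← mul_add, ← lintegral_union measurableSet_Ioc,
    Ioc_union_Ioc_eq_Ioc (by norm_num) (by norm_num)]
  exact Ioc_disjoint_Ioc_of_le le_rfl

lemma energy_zero (x : ℝ) : energy a b 0 x = 1 := by
  have : ∀ z, ENNReal.ofReal (density a b 0 x z ^ 2) =
      (Icc (0:ℝ) 1).indicator (1 : ℝ → ℝ≥0∞) z := by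
    intro z
    simp only [density, words, Finset.sum_singleton, height, slice, lo, zero_add, pow_zero,
      inv_one, one_mul]
    by_cases h : z ∈ Icc (0:ℝ) 1
    · simp [indicator_of_mem h]
    · simp [indicator_of_notMem h]
  rw [energy, lintegral_congr this, lintegral_indicator_one measurableSet_Icc]
  simp

/-- The averaged energies are bounded. -/
lemma exists_lintegral_energy_le (hb : 1 / 2 < b) (hba : b < a) (ha : a < 1) :
    ∃ B : ℝ, 0 ≤ B ∧ ∀ n, ∫⁻ x in Ioc (0:ℝ) 1, energy a b n x ≤ ENNReal.ofReal B := by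
  obtain ⟨u₀, R, κ, d, hu₀, hR, hκ0, hκ1, hd, hY1, hY2, hY3, hslope⟩ := exists_weights hb hba ha
  obtain ⟨c, hc, hclose⟩ := volume_close_le hb hba ha hd hslope
  have hb0 : 0 < b := by linarith
  have hR0 : 0 < R := by linarith
  set k := Real.exp (2 * ((a - b) / b))
  have hk0 : 0 < k := Real.exp_pos _
  let ρ : ℝ → ℝ := fun u => if u ≤ u₀ then 1 else R
  have hρ1 : ∀ u, 1 ≤ ρ u := fun u => by
    simp only [ρ]; split_ifs
    · exact le_rfl
    · exact hR
  have hρR : ∀ u, ρ u ≤ R := fun u => by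
    simp only [ρ]; split_ifs
    · exact hR
    · exact le_rfl
  have hρm : Measurable ρ := Measurable.ite measurableSet_Iic measurable_const measurable_const
  have hρ2 : ∀ u ∈ Icc (0:ℝ) 1, ρ (pre 2 u) = R := by
    intro u hu
    rw [pre_of_ne (by norm_num)]
    exact if_neg (by have := hu.1; linarith)
  let G : ℕ → ℝ → ℝ≥0∞ := fun n u => ENNReal.ofReal (ρ u) * energy a b n u
  have hGm : ∀ n, Measurable (G n) := fun n => hρm.ennreal_ofReal.mul (measurable_energy a b n)
  let B : ℝ := R + 2 * R * (k * c) / (1 - κ)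
  have h1κ : 0 < 1 - κ := by linarith
  have hB0 : 0 ≤ B := by positivity
  have hstep : ∀ n, ∫⁻ u in Ioc (0:ℝ) 1, G (n + 1) u ≤
      ENNReal.ofReal κ * (∫⁻ u in Ioc (0:ℝ) 1, G n u) + ENNReal.ofReal (2 * R * (k * c)) := by
    intro n
    obtain ⟨X, hX, hXle, hXint⟩ := lintegral_cross_le hb0 hba hc hclose n
    have hpt : ∀ u ∈ Ioc (0:ℝ) 1, G (n + 1) u ≤
        ENNReal.ofReal (κ / 2) * (G n (pre 1 u) + G n (pre 2 u)) +
          ENNReal.ofReal (2 * R) * X u := by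
      intro u hu'
      have hu := Ioc_subset_Icc_self hu'
      have hl : 0 < lam a b u := hb0.trans_le (le_lam hba hu)
      have comb : ∀ {r α r' : ℝ} (e : ℝ≥0∞), 0 ≤ r → r * (α / (4 * lam a b u)) ≤ κ / 2 * r' →
          ENNReal.ofReal r * (ENNReal.ofReal (α / (4 * lam a b u)) * e) ≤
            ENNReal.ofReal (κ / 2) * (ENNReal.ofReal r' * e) := by
        intro r α r' e h0 h
        rw [← mul_assoc, ← mul_assoc, ← ENNReal.ofReal_mul h0,
          ← ENNReal.ofReal_mul (by positivity)]
        exact mul_le_mul_left (ENNReal.ofReal_le_ofReal h) _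
      by_cases huu : u ≤ u₀
      · have hρu : ρ u = 1 := if_pos huu
        have hρ1' : ρ (pre 1 u) = 1 := if_pos (by rw [pre_one]; linarith [hu.1])
        have hY := hY1 u hu huu
        have hE := energy_succ_le hb0 hba n hu (α := 1 + 1 / R) (β := 1 + R) (c := 0)
          (by positivity) (by positivity) le_rfl (by
            intro p q hp hq
            have : (1 + 1 / R) * p ^ 2 + (1 + R) * q ^ 2 + 0 * (p * q) - (p + q) ^ 2
              = (p - R * q) ^ 2 / R := by field_simp; ring
            have : 0 ≤ (p - R * q) ^ 2 / R := by positivity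
            linarith)
        rw [ENNReal.ofReal_zero, zero_mul, add_zero] at hE
        refine le_trans ?_ le_self_add
        simp only [G]
        refine (mul_le_mul_right hE _).trans ?_
        rw [mul_add, mul_add]
        refine add_le_add (comb _ (by rw [hρu]; exact zero_le_one) ?_)
          (comb _ (by rw [hρu]; exact zero_le_one) ?_)
        · rw [hρu, hρ1', one_mul, div_le_iff₀ (by positivity)]
          linarith
        · rw [hρu, hρ2 u hu, one_mul, div_le_iff₀ (by positivity)]
          have : 1 + R = R * (1 + 1 / R) := by field_simp; ring
          rw [this]
          have := mul_le_mul_of_nonneg_left hY hR0.le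
          linarith
      · have hρu : ρ u = R := if_neg huu
        have hE := energy_succ_le hb0 hba n hu (α := 1) (β := 1) (c := 2)
          zero_le_one zero_le_one zero_le_two (by intro p q _ _; linarith)
        simp only [G]
        refine (mul_le_mul_right hE _).trans ?_
        rw [mul_add, mul_add, mul_add]
        refine add_le_add (add_le_add (comb _ (by rw [hρu]; exact hR0.le) ?_)
          (comb _ (by rw [hρu]; exact hR0.le) ?_)) ?_
        · rw [hρu, mul_one_div, div_le_iff₀ (by positivity)]
          by_cases h : u / 2 ≤ u₀
          · have hρ1' : ρ (pre 1 u) = 1 := if_pos (by rw [pre_one]; exact h)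
            rw [hρ1']
            have := hY2 u hu h
            linarith
          · have hρ1' : ρ (pre 1 u) = R := if_neg (by rw [pre_one]; exact h)
            rw [hρ1']
            have := mul_le_mul_of_nonneg_left (hY3 u hu) hR0.le
            linarith
        · rw [hρu, hρ2 u hu, mul_one_div, div_le_iff₀ (by positivity)]
          have := mul_le_mul_of_nonneg_left (hY3 u hu) hR0.le
          linarith
        · rw [hρu, ← mul_assoc, ← ENNReal.ofReal_mul hR0.le, mul_comm R 2]
          exact mul_le_mul_right (hXle u hu (not_le.1 huu)) _
    calc ∫⁻ u in Ioc (0:ℝ) 1, G (n + 1) u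
        ≤ ∫⁻ u in Ioc (0:ℝ) 1, (ENNReal.ofReal (κ / 2) * (G n (pre 1 u) + G n (pre 2 u)) +
          ENNReal.ofReal (2 * R) * X u) := setLIntegral_mono' measurableSet_Ioc hpt
      _ = ENNReal.ofReal (κ / 2) * (2 * ∫⁻ u in Ioc (0:ℝ) 1, G n u) +
          ENNReal.ofReal (2 * R) * ∫⁻ u in Ioc (0:ℝ) 1, X u := by
          rw [lintegral_add_right _ (hX.const_mul _),
            lintegral_const_mul' _ _ ENNReal.ofReal_ne_top,
            lintegral_const_mul' _ _ ENNReal.ofReal_ne_top, lintegral_comp_pre_add (hGm n)]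
      _ ≤ _ := by
          refine add_le_add (le_of_eq ?_) ?_
          · rw [← mul_assoc, ← ENNReal.ofReal_ofNat 2, ← ENNReal.ofReal_mul (by positivity)]
            norm_num
          · rw [ENNReal.ofReal_mul (p := 2 * R) (by positivity)]
            exact mul_le_mul_right ((setLIntegral_le_lintegral _ _).trans hXint) _
  have hA : ∀ n, ∫⁻ u in Ioc (0:ℝ) 1, G n u ≤ ENNReal.ofReal B := by
    intro n
    induction n with
    | zero =>
      calc ∫⁻ u in Ioc (0:ℝ) 1, G 0 u ≤ ∫⁻ _ in Ioc (0:ℝ) 1, ENNReal.ofReal R := by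
            refine lintegral_mono fun u => ?_
            simp only [G, energy_zero, mul_one]
            exact ENNReal.ofReal_le_ofReal (hρR u)
        _ = ENNReal.ofReal R := by simp
        _ ≤ _ := ENNReal.ofReal_le_ofReal (le_add_of_nonneg_right (by positivity))
    | succ n ih =>
      refine (hstep n).trans ((add_le_add (mul_le_mul_right ih _) le_rfl).trans ?_)
      rw [← ENNReal.ofReal_mul hκ0.le, ← ENNReal.ofReal_add (by positivity) (by positivity)]
      refine ENNReal.ofReal_le_ofReal ?_
      have h : (1 - κ) * (2 * R * (k * c) / (1 - κ)) = 2 * R * (k * c) := by field_simp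
      have h' : 0 ≤ (1 - κ) * R := by positivity
      simp only [B]
      linarith
  refine ⟨B, hB0, fun n => le_trans (lintegral_mono fun u => ?_) (hA n)⟩
  simp only [G]
  refine le_mul_of_one_le_left' ?_
  rw [← ENNReal.ofReal_one]
  exact ENNReal.ofReal_le_ofReal (hρ1 u)

end Energy

/-! ### Strips and truncated words -/

lemma Fbr_pre (a b : ℝ) (i : ℕ) (x y : ℝ) :
    Fbr a b i (pre i x, y) = (x, lam a b x * y + offSlope a b i * x) := by
  match i with
  | 1 =>
    simp only [Fbr, pre, lam, offSlope, Prod.mk.injEq]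
    constructor <;> ring
  | 0 | n + 2 =>
    simp only [Fbr, pre, lam, offSlope, Prod.mk.injEq]
    constructor <;> ring

lemma pre_Fbr_fst (a b : ℝ) (i : ℕ) (p : Pt) : pre i (Fbr a b i p).1 = p.1 := by
  match i with
  | 1 => simp only [Fbr, pre]; ring
  | 0 | n + 2 => simp only [Fbr, pre]; ring

lemma mem_Sbr_iff (i : ℕ) (x y : ℝ) :
    (pre i x, y) ∈ Sbr i ↔ x ∈ Icc (0:ℝ) 1 ∧ y ∈ Icc (0:ℝ) 1 := by
  match i with
  | 1 =>
    simp only [Sbr, pre, mem_prod, mem_Icc]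
    constructor <;> rintro ⟨⟨h1, h2⟩, h3⟩ <;> refine ⟨⟨?_, ?_⟩, h3⟩ <;> linarith
  | 0 | n + 2 =>
    simp only [Sbr, pre, mem_prod, mem_Icc]
    constructor <;> rintro ⟨⟨h1, h2⟩, h3⟩ <;> refine ⟨⟨?_, ?_⟩, h3⟩ <;> linarith

lemma wordF_concat (a b : ℝ) (w : List ℕ) (i : ℕ) :
    wordF a b (w ++ [i]) = Fbr a b i ∘ wordF a b w := by
  induction w with
  | nil => rfl
  | cons j w ih => rw [List.cons_append, wordF, ih, wordF, Function.comp_assoc]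

lemma wordS_concat (a b : ℝ) (w : List ℕ) (i : ℕ) :
    wordS a b (w ++ [i]) = wordS a b w ∩ wordF a b w ⁻¹' Sbr i := by
  induction w with
  | nil =>
    have : Sbr i ⊆ unitSq := by
      rintro ⟨x, y⟩ h
      obtain ⟨s, rfl⟩ : ∃ s, x = pre i s := ⟨_, (pre_Fbr_fst 1 1 i (x, y)).symm⟩
      rw [mem_Sbr_iff] at h
      exact ⟨pre_mem i h.1, h.2⟩
    exact (inter_eq_self_of_subset_right this).symm
  | cons j w ih =>
    match w, ih with
    | [], _ => rfl
    | k :: w, ih =>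
      change Sbr j ∩ Fbr a b j ⁻¹' wordS a b (k :: w ++ [i]) = _
      rw [ih, preimage_inter, ← inter_assoc]
      rfl

lemma wordU_concat (a b : ℝ) (w : List ℕ) (i : ℕ) :
    wordU a b (w ++ [i]) = Fbr a b i '' (wordU a b w ∩ Sbr i) := by
  rw [wordU, wordS_concat, wordF_concat, image_comp, image_inter_preimage, wordU]

lemma volume_IWord_le (a b : ℝ) (w : List ℕ) :
    volume (IWord a b w) ≤ ENNReal.ofReal ((1 / 2) ^ w.length) := by
  have key : ∃ c, IWord a b w ⊆ Icc c (c + (1 / 2) ^ w.length) := by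
    induction w with
    | nil =>
      refine ⟨0, ?_⟩
      rintro _ ⟨p, hp, rfl⟩
      simpa using hp.1
    | cons i w ih =>
      obtain ⟨c, hc⟩ := ih
      refine ⟨pre i c, ?_⟩
      rintro _ ⟨p, hp, rfl⟩
      have h1 : (Fbr a b i p).1 ∈ IWord a b w := by
        match w, hp with
        | [], hp =>
          have hp' : (pre i (Fbr a b i p).1, p.2) ∈ Sbr i := by
            rw [pre_Fbr_fst]; exact hp
          rw [mem_Sbr_iff] at hp'
          exact ⟨((Fbr a b i p).1, p.2), hp', rfl⟩
        | j :: w, hp => exact ⟨_, hp.2, rfl⟩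
      have h2 := hc h1
      rw [← pre_Fbr_fst a b i p, List.length_cons, pow_succ]
      by_cases hi : i = 1
      · subst hi; simp only [pre_one]; constructor <;> linarith [h2.1, h2.2]
      · simp only [pre_of_ne hi]; constructor <;> linarith [h2.1, h2.2]
  obtain ⟨c, hc⟩ := key
  refine (measure_mono hc).trans ?_
  rw [Real.volume_Icc, add_sub_cancel_left]

section Geometry

variable {a b : ℝ}

lemma mem_wordU (hb : 0 < b) (hba : b < a) (ha : a < 1) (w : List ℕ) :
    ∀ x y : ℝ, (x, y) ∈ wordU a b w ↔ x ∈ Icc (0:ℝ) 1 ∧ y ∈ slice a b w.reverse x := by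
  induction w using List.reverseRecOn with
  | nil =>
    intro x y
    simp only [wordU, wordF, wordS, image_id, unitSq, mem_prod, List.reverse_nil, slice, lo,
      height, zero_add]
  | append_singleton w i ih =>
    intro x y
    rw [wordU_concat, List.reverse_append, List.reverse_singleton, List.singleton_append]
    constructor
    · rintro ⟨⟨s, t⟩, ⟨h1, h2⟩, h3⟩
      obtain rfl : s = pre i x := by
        have := pre_Fbr_fst a b i (s, t)
        rw [h3] at this
        exact this.symm
      rw [Fbr_pre, Prod.mk.injEq] at h3
      obtain ⟨-, rfl⟩ := h3
      have hx := ((mem_Sbr_iff i x t).1 h2).1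
      exact ⟨hx, (mem_slice_cons (hb.trans_le (le_lam hba hx)) i _ t).2 ((ih _ _).1 h1).2⟩
    · rintro ⟨hx, hy⟩
      have hl := hb.trans_le (le_lam hba hx)
      obtain ⟨t, rfl⟩ : ∃ t, y = lam a b x * t + offSlope a b i * x :=
        ⟨(y - offSlope a b i * x) / lam a b x, by field_simp; ring⟩
      rw [mem_slice_cons hl] at hy
      have hp := pre_mem i hx
      refine ⟨(pre i x, t), ⟨(ih _ _).2 ⟨hp, hy⟩, (mem_Sbr_iff i x t).2 ⟨hx, ?_, ?_⟩⟩,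
        Fbr_pre a b i x t⟩
      · exact (lo_nonneg hb hba ha _ _ hp).trans hy.1
      · exact hy.2.trans (lo_add_height_le hb hba ha _ _ hp)

lemma measurableSet_wordU (hb : 0 < b) (hba : b < a) (ha : a < 1) (w : List ℕ) :
    MeasurableSet (wordU a b w) := by
  have : wordU a b w = {p : ℝ × ℝ | p.1 ∈ Icc (0:ℝ) 1} ∩
      {p : ℝ × ℝ | p.2 ∈ slice a b w.reverse p.1} := by
    ext ⟨x, y⟩
    exact mem_wordU hb hba ha w x y
  rw [this]
  exact (measurable_fst measurableSet_Icc).inter (measurableSet_slice a b _)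

lemma len_wordU_inter (hb : 0 < b) (hba : b < a) (ha : a < 1) (w : List ℕ) {x : ℝ}
    (hx : x ∈ Icc (0:ℝ) 1) :
    len (wordU a b w ∩ Ws x) = ENNReal.ofReal (height a b w.reverse x) := by
  have h : wordU a b w ∩ Ws x = Prod.mk x '' slice a b w.reverse x := by
    ext ⟨s, y⟩
    simp only [mem_inter_iff, mem_wordU hb hba ha, Ws, mem_prod, mem_singleton_iff, mem_image,
      Prod.mk.injEq, exists_eq_right_right]
    constructor
    · rintro ⟨⟨_, h⟩, rfl, _⟩; exact ⟨h, rfl⟩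
    · rintro ⟨h, rfl⟩
      exact ⟨⟨hx, h⟩, rfl, (lo_nonneg hb hba ha _ _ hx).trans h.1,
        h.2.trans (lo_add_height_le hb hba ha _ _ hx)⟩
  have hiso : Isometry (Prod.mk x : ℝ → ℝ × ℝ) :=
    Isometry.of_dist_eq fun y z => by simp [Prod.dist_eq]
  rw [len, h, hiso.hausdorffMeasure_image (Or.inl zero_le_one), hausdorffMeasure_real, slice,
    Real.volume_Icc, add_sub_cancel_left]

lemma dW_eq (hb : 0 < b) (hba : b < a) (ha : a < 1) (w : List ℕ) :
    dW a b w = ENNReal.ofReal (height a b w.reverse 0) := by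
  have h0 : (0:ℝ) ∈ Icc (0:ℝ) 1 := ⟨le_rfl, zero_le_one⟩
  refine le_antisymm (iSup₂_le fun x hx => ?_) ?_
  · rw [len_wordU_inter hb hba ha w hx]
    exact ENNReal.ofReal_le_ofReal (height_antitone hb hba _ 0 h0 x hx hx.1)
  · rw [← len_wordU_inter hb hba ha w h0]
    exact le_iSup₂ (f := fun x _ => len (wordU a b w ∩ Ws x)) 0 h0

/-- The ratio by which the heights of the strips of `M(r)` may exceed `r`. -/
def heightRatio (a b : ℝ) : ℝ := Real.exp (2 * ((a - b) / b)) / a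

lemma Mset_bounds (hb : 0 < b) (hba : b < a) (ha : a < 1) {r : ℝ} (hr : 0 < r) {w : List ℕ}
    (hw : w ∈ Mset a b r) :
    (∀ i ∈ w, i = 1 ∨ i = 2) ∧ r ≤ height a b w.reverse 0 ∧
      ∀ x ∈ Icc (0:ℝ) 1, height a b w.reverse x ≤ heightRatio a b * r := by
  obtain ⟨A, hA, n, rfl, h1, h2⟩ := hw
  have h0 : (0:ℝ) ∈ Icc (0:ℝ) 1 := ⟨le_rfl, zero_le_one⟩
  have ha0 : 0 < a := hb.trans hba
  refine ⟨?_, ?_, ?_⟩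
  · intro i hi
    obtain ⟨k, rfl⟩ := List.mem_ofFn.1 hi
    exact hA _
  · rw [dW_eq hb hba ha] at h1
    exact (ENNReal.ofReal_le_ofReal_iff (height_pos hb hba _ 0 h0).le).1 h1
  · have h3 := h2 (n + 2) (by omega)
    have h4 : prefixWord A (n + 2) = prefixWord A (n + 1) ++ [A (n + 1)] :=
      List.ofFn_succ_last
    rw [h4, dW_eq hb hba ha, List.reverse_append, List.reverse_singleton, List.singleton_append,
      ENNReal.ofReal_lt_ofReal_iff hr] at h3
    generalize (prefixWord A (n + 1)).reverse = u at h3 ⊢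
    have hp := pre_mem (A (n + 1)) h0
    have h5 : lam a b 0 = a := by simp [lam]
    rw [height, h5] at h3
    intro x hx
    calc height a b u x ≤ Real.exp (2 * ((a - b) / b) * |x - pre (A (n + 1)) 0|) *
          height a b u (pre (A (n + 1)) 0) := height_distortion hb hba u x hx _ hp
      _ ≤ Real.exp (2 * ((a - b) / b)) * (r / a) := by
          refine mul_le_mul (Real.exp_le_exp.2 ?_) ?_ (height_pos hb hba u _ hp).le
            (Real.exp_pos _).le
          · refine mul_le_of_le_one_right ?_ ?_
            · have : 0 < a - b := by linarith
              positivity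
            · rw [abs_le]
              constructor <;> linarith [hx.1, hx.2, hp.1, hp.2]
          · rw [le_div_iff₀ ha0]; linarith
      _ = _ := by rw [heightRatio]; ring

end Geometry

/-! ### Counting the truncated words along the leaves -/

lemma sum_words_take {M : Type*} [AddCommMonoid M] (m k : ℕ) (φ : List ℕ → M) :
    ∑ v ∈ words (m + k), φ (v.take m) = 2 ^ k • ∑ u ∈ words m, φ u := by
  induction m generalizing φ with
  | zero => simp [words, card_words]
  | succ m ih =>
    rw [Nat.add_right_comm, sum_words_succ, sum_words_succ]
    simp only [List.take_succ_cons]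
    rw [ih fun u => φ (1 :: u), ih fun u => φ (2 :: u), smul_add]

lemma sq_setLIntegral_le {f : ℝ → ℝ≥0∞} (hf : Measurable f) (s : Set ℝ) :
    (∫⁻ z in s, f z) ^ 2 ≤ volume s * ∫⁻ z in s, f z ^ 2 := by
  have h := ENNReal.lintegral_mul_le_Lp_mul_Lq (volume.restrict s) Real.HolderConjugate.two_two
    (f := fun _ => 1) (g := f) aemeasurable_const hf.aemeasurable
  simp only [Pi.mul_apply, one_mul, one_pow, lintegral_const, Measure.restrict_apply_univ,
    ENNReal.rpow_two] at h
  calc _ ≤ (volume s ^ (1 / 2 : ℝ) * (∫⁻ z in s, f z ^ 2) ^ (1 / 2 : ℝ)) ^ 2 := by gcongr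
    _ = _ := by
      rw [mul_pow, ← ENNReal.rpow_two, ← ENNReal.rpow_two, ← ENNReal.rpow_mul,
        ← ENNReal.rpow_mul]
      norm_num

lemma lintegral_setLIntegral_Icc {f : ℝ → ℝ≥0∞} (hf : Measurable f) (ρ : ℝ) :
    ∫⁻ z, ∫⁻ y in Icc (z - ρ) (z + ρ), f y = ENNReal.ofReal (2 * ρ) * ∫⁻ y, f y := by
  have hS : MeasurableSet {p : ℝ × ℝ | p.2 ∈ Icc (p.1 - ρ) (p.1 + ρ)} :=
    (measurableSet_le (f := fun p : ℝ × ℝ => p.1 - ρ) (by fun_prop) measurable_snd).inter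
      (measurableSet_le (g := fun p : ℝ × ℝ => p.1 + ρ) measurable_snd (by fun_prop))
  have hm : Measurable ({p : ℝ × ℝ | p.2 ∈ Icc (p.1 - ρ) (p.1 + ρ)}.indicator fun p => f p.2) :=
    (hf.comp measurable_snd).indicator hS
  calc _ = ∫⁻ z, ∫⁻ y,
        {p : ℝ × ℝ | p.2 ∈ Icc (p.1 - ρ) (p.1 + ρ)}.indicator (fun p => f p.2) (z, y) := by
        refine lintegral_congr fun z => ?_
        rw [← lintegral_indicator measurableSet_Icc]
        rfl
    _ = ∫⁻ y, ∫⁻ z,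
        {p : ℝ × ℝ | p.2 ∈ Icc (p.1 - ρ) (p.1 + ρ)}.indicator (fun p => f p.2) (z, y) :=
        lintegral_lintegral_swap hm.aemeasurable
    _ = ∫⁻ y, ENNReal.ofReal (2 * ρ) * f y := by
        refine lintegral_congr fun y => ?_
        calc _ = ∫⁻ z, (Icc (y - ρ) (y + ρ)).indicator (fun _ => f y) z := by
              refine lintegral_congr fun z => ?_
              have : (z, y) ∈ {p : ℝ × ℝ | p.2 ∈ Icc (p.1 - ρ) (p.1 + ρ)} ↔
                  z ∈ Icc (y - ρ) (y + ρ) := by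
                simp only [mem_ofPred_eq, mem_Icc]
                constructor <;> rintro ⟨h1, h2⟩ <;> constructor <;> linarith
              by_cases h : z ∈ Icc (y - ρ) (y + ρ)
              · rw [indicator_of_mem h, indicator_of_mem (this.2 h)]
              · rw [indicator_of_notMem h, indicator_of_notMem (mt this.1 h)]
          _ = _ := by
              rw [lintegral_indicator measurableSet_Icc, setLIntegral_const, Real.volume_Icc,
                mul_comm]
              ring_nf
    _ = _ := lintegral_const_mul _ hf

open Classical in
/-- The weight of a word in the transversality sum: a bound for the length of its dyadic interval
if the word belongs to `M(r)`, zero otherwise. -/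
def weight (a b r : ℝ) (w : List ℕ) : ℝ≥0∞ :=
  if w ∈ Mset a b r then ENNReal.ofReal ((1 / 2) ^ w.length) else 0

/-- The weighted number of strips of `M(r)` through a point. -/
def coverage (a b r : ℝ) (p : ℝ × ℝ) : ℝ≥0∞ :=
  ∑' w, weight a b r w * (wordU a b w).indicator 1 p

section Coverage

variable {a b : ℝ}

lemma NTrSum_le_lintegral (hb : 0 < b) (hba : b < a) (ha : a < 1) (δ r : ℝ) :
    NTrSum a b δ r ≤ ∫⁻ p, coverage a b r p ^ 2 := by
  have hU := measurableSet_wordU hb hba ha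
  have hf : ∀ w, Measurable fun p : ℝ × ℝ =>
      weight a b r w * (wordU a b w).indicator (1 : ℝ × ℝ → ℝ≥0∞) p :=
    fun w => (measurable_one.indicator (hU w)).const_mul _
  have hsq : ∀ p, coverage a b r p ^ 2 = ∑' q : List ℕ × List ℕ,
      (weight a b r q.1 * (wordU a b q.1).indicator 1 p) *
        (weight a b r q.2 * (wordU a b q.2).indicator 1 p) := by
    intro p
    rw [ENNReal.tsum_prod (f := fun w v => (weight a b r w * (wordU a b w).indicator 1 p) *
        (weight a b r v * (wordU a b v).indicator 1 p))]
    simp only [ENNReal.tsum_mul_left, ENNReal.tsum_mul_right]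
    rw [sq, coverage]
  simp_rw [hsq]
  rw [lintegral_tsum (f := fun (q : List ℕ × List ℕ) p =>
      (weight a b r q.1 * (wordU a b q.1).indicator 1 p) *
        (weight a b r q.2 * (wordU a b q.2).indicator 1 p))
    fun q => ((hf q.1).mul (hf q.2)).aemeasurable]
  refine ENNReal.tsum_le_tsum fun q => ?_
  split_ifs with h
  · obtain ⟨h1, h2, -⟩ := h
    have : ∀ p, (weight a b r q.1 * (wordU a b q.1).indicator 1 p) *
        (weight a b r q.2 * (wordU a b q.2).indicator 1 p) =
        (weight a b r q.1 * weight a b r q.2) *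
          (wordU a b q.1 ∩ wordU a b q.2).indicator 1 p := by
      intro p
      rw [inter_indicator_one, Pi.mul_apply]
      ring
    simp_rw [this]
    rw [lintegral_const_mul _ (measurable_one.indicator ((hU _).inter (hU _))),
      lintegral_indicator_one ((hU _).inter (hU _)), weight, weight, if_pos h1, if_pos h2,
      mul_assoc, mul_comm]
    exact mul_le_mul_left (mul_le_mul' (volume_IWord_le a b _) (volume_IWord_le a b _)) _
  · exact zero_le

lemma heightRatio_pos (hb : 0 < b) (hba : b < a) : 0 < heightRatio a b :=
  div_pos (Real.exp_pos _) (hb.trans hba)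

lemma slice_append_subset (hb : 0 < b) (hba : b < a) (ha : a < 1) (v w : List ℕ) {x : ℝ}
    (hx : x ∈ Icc (0:ℝ) 1) : slice a b (v ++ w) x ⊆ slice a b v x := by
  obtain ⟨y, hy, h1, h2⟩ := exists_height_append (a := a) (b := b) v w x hx
  have h3 := (height_pos hb hba v x hx).le
  rw [slice, slice, h1, h2]
  refine Icc_subset_Icc (le_add_of_nonneg_right (mul_nonneg h3 (lo_nonneg hb hba ha w y hy))) ?_
  have := mul_le_of_le_one_right h3 (lo_add_height_le hb hba ha w y hy)
  linarith

open Classical in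
/-- A leaf meets boundedly many strips of `M(r)`, and only close to its slice. -/
lemma sum_take_mem_Mset_le (hb : 0 < b) (hba : b < a) (ha : a < 1) {K : ℕ}
    (hK : heightRatio a b * a ^ K < 1) {r : ℝ} (hr : 0 < r) {N : ℕ} {v : List ℕ}
    (hv : v.length = N) {x : ℝ} (hx : x ∈ Icc (0:ℝ) 1) (z : ℝ) :
    ∑ m ∈ Finset.range (N + 1), (if (v.take m).reverse ∈ Mset a b r ∧ z ∈ slice a b (v.take m) x
        then (1 : ℝ≥0∞) else 0) ≤
      K * ∫⁻ y in Icc (z - heightRatio a b * r) (z + heightRatio a b * r),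
        ENNReal.ofReal ((height a b v x)⁻¹ * (slice a b v x).indicator 1 y) := by
  set C := heightRatio a b
  have hC : 0 < C := heightRatio_pos hb hba
  have ha0 : 0 < a := hb.trans hba
  have h0 : (0:ℝ) ∈ Icc (0:ℝ) 1 := ⟨le_rfl, zero_le_one⟩
  by_cases hex : ∃ m, (v.take m).reverse ∈ Mset a b r ∧ z ∈ slice a b (v.take m) x
  swap
  · push Not at hex
    rw [Finset.sum_eq_zero fun m _ => if_neg fun h => hex m h.1 h.2]
    exact zero_le
  have hm₀ := Nat.find_spec hex
  set m₀ := Nat.find hex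
  have hcard : ∑ m ∈ Finset.range (N + 1), (if (v.take m).reverse ∈ Mset a b r ∧
      z ∈ slice a b (v.take m) x then (1 : ℝ≥0∞) else 0) ≤ K := by
    rw [Finset.sum_boole]
    have hsub : (Finset.range (N + 1)).filter (fun m => (v.take m).reverse ∈ Mset a b r ∧
        z ∈ slice a b (v.take m) x) ⊆ Finset.Ico m₀ (m₀ + K) := by
      intro m hm
      obtain ⟨hmN, hm⟩ := Finset.mem_filter.1 hm
      have hmN := Finset.mem_range.1 hmN
      have hle : m₀ ≤ m := Nat.find_min' hex hm
      refine Finset.mem_Ico.2 ⟨hle, ?_⟩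
      by_contra! hge
      have hsplit : v.take m = v.take m₀ ++ (v.take m).drop m₀ := by
        conv_lhs => rw [← List.take_append_drop m₀ (v.take m), List.take_take, min_eq_left hle]
      obtain ⟨y, hy, h1, -⟩ :=
        exists_height_append (a := a) (b := b) (v.take m₀) ((v.take m).drop m₀) 0 h0
      have h2 := height_le_pow hb hba ((v.take m).drop m₀) y hy
      have h3 := (Mset_bounds hb hba ha hr hm.1).2.1
      have h4 := (Mset_bounds hb hba ha hr hm₀.1).2.2 0 h0
      rw [List.reverse_reverse] at h3 h4
      rw [← hsplit] at h1
      have hlen : K ≤ ((v.take m).drop m₀).length := by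
        rw [List.length_drop, List.length_take]; omega
      have h5 := h2.trans (pow_le_pow_of_le_one ha0.le ha.le hlen)
      have h6 : height a b (v.take m) 0 ≤ C * r * a ^ K := by
        rw [h1]
        exact mul_le_mul h4 h5 (height_pos hb hba _ y hy).le (by positivity)
      have h7 : C * a ^ K * r < 1 * r := mul_lt_mul_of_pos_right hK hr
      linarith
    have := Finset.card_le_card hsub
    rw [Nat.card_Ico, Nat.add_sub_cancel_left] at this
    exact_mod_cast this
  have hone : 1 ≤ ∫⁻ y in Icc (z - C * r) (z + C * r),
      ENNReal.ofReal ((height a b v x)⁻¹ * (slice a b v x).indicator 1 y) := by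
    have hh := height_pos hb hba v x hx
    have hsub : slice a b v x ⊆ Icc (z - C * r) (z + C * r) := by
      have h1 : slice a b v x ⊆ slice a b (v.take m₀) x := by
        conv_lhs => rw [← List.take_append_drop m₀ v]
        exact slice_append_subset hb hba ha _ _ hx
      have h2 := (Mset_bounds hb hba ha hr hm₀.1).2.2 x hx
      rw [List.reverse_reverse] at h2
      refine h1.trans (Icc_subset_Icc ?_ ?_) <;> linarith [hm₀.2.1, hm₀.2.2]
    calc (1 : ℝ≥0∞) = ∫⁻ _ in slice a b v x, ENNReal.ofReal (height a b v x)⁻¹ := by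
          rw [setLIntegral_const, slice, Real.volume_Icc, add_sub_cancel_left,
            ← ENNReal.ofReal_mul (by positivity), inv_mul_cancel₀ hh.ne', ENNReal.ofReal_one]
      _ = ∫⁻ y in slice a b v x,
          ENNReal.ofReal ((height a b v x)⁻¹ * (slice a b v x).indicator 1 y) :=
          setLIntegral_congr_fun measurableSet_Icc fun y hy => by
            simp only [indicator_of_mem (show y ∈ slice a b v x from hy), Pi.one_apply, mul_one]
      _ ≤ _ := lintegral_mono_set hsub
  calc _ ≤ (K : ℝ≥0∞) * 1 := by rwa [mul_one]
    _ ≤ _ := mul_le_mul_right hone _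

lemma coverage_le (hb : 0 < b) (hba : b < a) (ha : a < 1) {K : ℕ}
    (hK : heightRatio a b * a ^ K < 1) {r : ℝ} (hr : 0 < r) {N : ℕ} (hN : a ^ N < r) {x : ℝ}
    (hx : x ∈ Icc (0:ℝ) 1) (z : ℝ) :
    coverage a b r (x, z) ≤
      K * ∫⁻ y in Icc (z - heightRatio a b * r) (z + heightRatio a b * r),
        ENNReal.ofReal (density a b N x y) := by
  classical
  have ha0 : 0 < a := hb.trans hba
  have h0 : (0:ℝ) ∈ Icc (0:ℝ) 1 := ⟨le_rfl, zero_le_one⟩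
  let c : List ℕ → ℝ≥0∞ := fun u =>
    if u.reverse ∈ Mset a b r ∧ z ∈ slice a b u x then 1 else 0
  have hterm : ∀ u : List ℕ, weight a b r u.reverse * (wordU a b u.reverse).indicator 1 (x, z) =
      ENNReal.ofReal ((1 / 2) ^ u.length) * c u := by
    intro u
    have hmem := mem_wordU hb hba ha u.reverse x z
    rw [List.reverse_reverse] at hmem
    by_cases hu : u.reverse ∈ Mset a b r
    · rw [weight, if_pos hu, List.length_reverse]
      by_cases hz : z ∈ slice a b u x
      · rw [indicator_of_mem (hmem.2 ⟨hx, hz⟩), Pi.one_apply]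
        exact congrArg _ (if_pos ⟨hu, hz⟩).symm
      · rw [indicator_of_notMem fun h => hz (hmem.1 h).2]
        exact congrArg _ (if_neg fun h => hz h.2).symm
    · rw [weight, if_neg hu, zero_mul, show c u = 0 from if_neg fun h => hu h.1, mul_zero]
  have hsupp : ∀ u : List ℕ, u ∉ (Finset.range (N + 1)).biUnion words →
      ENNReal.ofReal ((1 / 2) ^ u.length) * c u = 0 := by
    intro u hu
    rw [show c u = 0 from if_neg fun h => hu ?_, mul_zero]
    obtain ⟨h1, h2, -⟩ := Mset_bounds hb hba ha hr h.1
    rw [List.reverse_reverse] at h2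
    refine Finset.mem_biUnion.2 ⟨u.length, Finset.mem_range.2 ?_,
      mem_words.2 ⟨rfl, fun i hi => h1 i (List.mem_reverse.2 hi)⟩⟩
    by_contra! hlt
    have h3 := height_le_pow hb hba u 0 h0
    have h4 := pow_le_pow_of_le_one ha0.le ha.le (show N ≤ u.length by omega)
    linarith
  have hlevel : ∀ m ∈ Finset.range (N + 1),
      ∑ u ∈ words m, ENNReal.ofReal ((1 / 2) ^ u.length) * c u =
        ∑ v ∈ words N, ENNReal.ofReal ((1 / 2) ^ N) * c (v.take m) := by
    intro m hm
    obtain ⟨k, rfl⟩ := Nat.exists_eq_add_of_le (Nat.lt_succ_iff.1 (Finset.mem_range.1 hm))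
    rw [← Finset.mul_sum, sum_words_take, nsmul_eq_mul, ← mul_assoc, Finset.mul_sum]
    refine Finset.sum_congr rfl fun u hu => ?_
    rw [(mem_words.1 hu).1, pow_add, ENNReal.ofReal_mul (by positivity),
      mul_assoc (ENNReal.ofReal _)]
    have : ENNReal.ofReal ((1 / 2) ^ k) * ((2 ^ k : ℕ) : ℝ≥0∞) = 1 := by
      rw [← ENNReal.ofReal_natCast, ← ENNReal.ofReal_mul (by positivity)]
      push_cast
      rw [← mul_pow]
      norm_num
    rw [this, mul_one]
  have hdens : ∀ y, ∑ v ∈ words N, ENNReal.ofReal ((1 / 2) ^ N) *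
      ENNReal.ofReal ((height a b v x)⁻¹ * (slice a b v x).indicator 1 y) =
        ENNReal.ofReal (density a b N x y) := by
    intro y
    have hnn : ∀ v : List ℕ, 0 ≤ (height a b v x)⁻¹ * (slice a b v x).indicator (1 : ℝ → ℝ) y :=
      fun v => mul_nonneg (inv_nonneg.2 (height_pos hb hba v x hx).le)
        (indicator_nonneg (fun _ _ => zero_le_one) _)
    have hrw : density a b N x y = ∑ v ∈ words N, (1 / 2) ^ N *
        ((height a b v x)⁻¹ * (slice a b v x).indicator 1 y) := by
      refine Finset.sum_congr rfl fun v _ => ?_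
      rw [mul_inv, one_div, inv_pow, mul_assoc]
    rw [hrw, ENNReal.ofReal_sum_of_nonneg fun v _ => mul_nonneg (by positivity) (hnn v)]
    exact Finset.sum_congr rfl fun v _ => (ENNReal.ofReal_mul (by positivity)).symm
  calc coverage a b r (x, z)
      = ∑' u : List ℕ, ENNReal.ofReal ((1 / 2) ^ u.length) * c u := by
        rw [coverage, ← (List.reverse_involutive (α := ℕ)).toPerm.tsum_eq]
        exact tsum_congr hterm
    _ = ∑ m ∈ Finset.range (N + 1), ∑ u ∈ words m, ENNReal.ofReal ((1 / 2) ^ u.length) * c u := by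
        rw [tsum_eq_sum hsupp, Finset.sum_biUnion]
        intro m _ m' _ hne
        refine Finset.disjoint_left.2 fun u h h' => hne ?_
        rw [← (mem_words.1 h).1, (mem_words.1 h').1]
    _ = ∑ v ∈ words N, ENNReal.ofReal ((1 / 2) ^ N) * ∑ m ∈ Finset.range (N + 1), c (v.take m) := by
        rw [Finset.sum_congr rfl hlevel, Finset.sum_comm]
        simp only [Finset.mul_sum]
    _ ≤ ∑ v ∈ words N, ENNReal.ofReal ((1 / 2) ^ N) *
        (K * ∫⁻ y in Icc (z - heightRatio a b * r) (z + heightRatio a b * r),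
          ENNReal.ofReal ((height a b v x)⁻¹ * (slice a b v x).indicator 1 y)) :=
        Finset.sum_le_sum fun v hv => mul_le_mul_right
          (sum_take_mem_Mset_le hb hba ha hK hr (mem_words.1 hv).1 hx z) _
    _ = K * ∫⁻ y in Icc (z - heightRatio a b * r) (z + heightRatio a b * r),
          ∑ v ∈ words N, ENNReal.ofReal ((1 / 2) ^ N) *
            ENNReal.ofReal ((height a b v x)⁻¹ * (slice a b v x).indicator 1 y) := by
        have hm : ∀ v : List ℕ, Measurable fun y =>
            ENNReal.ofReal ((height a b v x)⁻¹ * (slice a b v x).indicator 1 y) := fun v =>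
          ((measurable_one.indicator measurableSet_Icc).const_mul _).ennreal_ofReal
        rw [lintegral_finsetSum _ fun v _ => (hm v).const_mul _, Finset.mul_sum]
        refine Finset.sum_congr rfl fun v _ => ?_
        rw [lintegral_const_mul _ (hm v)]
        ring
    _ = _ := by simp_rw [hdens]

lemma measurable_coverage (hb : 0 < b) (hba : b < a) (ha : a < 1) (r : ℝ) :
    Measurable (coverage a b r) :=
  Measurable.tsum fun w =>
    (measurable_one.indicator (measurableSet_wordU hb hba ha w)).const_mul _

lemma lintegral_coverage_sq_le (hb : 0 < b) (hba : b < a) (ha : a < 1) {K : ℕ}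
    (hK : heightRatio a b * a ^ K < 1) {r : ℝ} (hr : 0 < r) {N : ℕ} (hN : a ^ N < r) :
    ∫⁻ p, coverage a b r p ^ 2 ≤
      ENNReal.ofReal ((K * (2 * (heightRatio a b * r))) ^ 2) *
        ∫⁻ x in Ioc (0:ℝ) 1, energy a b N x := by
  set ρ := heightRatio a b * r
  have hρ : 0 < ρ := mul_pos (heightRatio_pos hb hba) hr
  have hfib : ∀ x ∈ Icc (0:ℝ) 1, ∫⁻ z, coverage a b r (x, z) ^ 2 ≤
      ENNReal.ofReal ((K * (2 * ρ)) ^ 2) * energy a b N x := by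
    intro x hx
    have hd : Measurable fun y => ENNReal.ofReal (density a b N x y) :=
      ((measurable_density a b N).comp measurable_prodMk_left).ennreal_ofReal
    calc ∫⁻ z, coverage a b r (x, z) ^ 2
        ≤ ∫⁻ z, (K : ℝ≥0∞) ^ 2 * (ENNReal.ofReal (2 * ρ) *
          ∫⁻ y in Icc (z - ρ) (z + ρ), ENNReal.ofReal (density a b N x y) ^ 2) := by
          refine lintegral_mono fun z => ?_
          refine (pow_le_pow_left' (coverage_le hb hba ha hK hr hN hx z) 2).trans ?_
          rw [mul_pow]
          refine mul_le_mul_right ((sq_setLIntegral_le hd _).trans_eq ?_) _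
          rw [Real.volume_Icc, show z + ρ - (z - ρ) = 2 * ρ by ring]
      _ = (K : ℝ≥0∞) ^ 2 * (ENNReal.ofReal (2 * ρ) * (ENNReal.ofReal (2 * ρ) *
          ∫⁻ y, ENNReal.ofReal (density a b N x y) ^ 2)) := by
          rw [lintegral_const_mul' _ _ (by finiteness),
            lintegral_const_mul' _ _ ENNReal.ofReal_ne_top,
            lintegral_setLIntegral_Icc (hd.pow_const 2)]
      _ = _ := by
          rw [energy, mul_pow, ENNReal.ofReal_mul (p := (K:ℝ) ^ 2) (by positivity),
            ENNReal.ofReal_pow K.cast_nonneg, ENNReal.ofReal_natCast,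
            ENNReal.ofReal_pow (by positivity)]
          simp_rw [ENNReal.ofReal_pow (density_nonneg hb hba N hx _)]
          ring
  have hzero : ∀ x ∉ Icc (0:ℝ) 1, ∫⁻ z, coverage a b r (x, z) ^ 2 = 0 := by
    intro x hx
    have : ∀ z, coverage a b r (x, z) = 0 := fun z => ENNReal.tsum_eq_zero.2 fun w => by
      rw [indicator_of_notMem fun h => hx ((mem_wordU hb hba ha w x z).1 h).1, mul_zero]
    simp [this]
  rw [Measure.volume_eq_prod,
    lintegral_prod _ ((measurable_coverage hb hba ha r).pow_const 2).aemeasurable,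
    restrict_Ioc_eq_restrict_Icc, ← lintegral_const_mul _ (measurable_energy a b N),
    ← lintegral_indicator measurableSet_Icc]
  refine lintegral_mono fun x => ?_
  by_cases hx : x ∈ Icc (0:ℝ) 1
  · rw [indicator_of_mem hx]
    exact hfib x hx
  · rw [hzero x hx]
    exact zero_le

end Coverage
/-- The piecewise affine generalized horseshoe map with `1/2 < b < a < 1` satisfies the
transversality condition. -/
theorem affine_example_transversality (a b : ℝ) (hb : 1/2 < b) (hba : b < a) (ha : a < 1) :
    ∃ δ > (0:ℝ),
      limsup (fun r : ℝ => (ENNReal.ofReal r)⁻¹ ^ 2 * NTrSum a b δ r) (𝓝[>] (0:ℝ)) < ⊤ := by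
  have hb0 : 0 < b := by linarith
  have ha0 : 0 < a := hb0.trans hba
  obtain ⟨B, hB0, hB⟩ := exists_lintegral_energy_le hb hba ha
  set C := heightRatio a b
  have hC : 0 < C := heightRatio_pos hb0 hba
  obtain ⟨K, hK⟩ := exists_pow_lt_of_lt_one (inv_pos.2 hC) ha
  have hK' : C * a ^ K < 1 := by
    have := mul_lt_mul_of_pos_left hK hC
    rwa [mul_inv_cancel₀ hC.ne'] at this
  refine ⟨1, one_pos, ?_⟩
  have hbound : ∀ r > (0:ℝ), (ENNReal.ofReal r)⁻¹ ^ 2 * NTrSum a b 1 r ≤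
      ENNReal.ofReal ((K * (2 * C)) ^ 2 * B) := by
    intro r hr
    obtain ⟨N, hN⟩ := exists_pow_lt_of_lt_one hr ha
    have h := (NTrSum_le_lintegral hb0 hba ha 1 r).trans
      ((lintegral_coverage_sq_le hb0 hba ha hK' hr hN).trans (mul_le_mul_right (hB N) _))
    refine (mul_le_mul_right h _).trans_eq ?_
    rw [← ENNReal.ofReal_inv_of_pos hr, ← ENNReal.ofReal_pow (by positivity),
      ← ENNReal.ofReal_mul (by positivity), ← ENNReal.ofReal_mul (by positivity)]
    congr 1
    change r⁻¹ ^ 2 * ((K * (2 * (C * r))) ^ 2 * B) = _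
    field_simp
  refine (limsup_le_of_le (by isBoundedDefault) ?_).trans_lt
    (ENNReal.ofReal_lt_top (r := (K * (2 * C)) ^ 2 * B))
  filter_upwards [self_mem_nhdsWithin] with r hr
  exact hbound r hr

end AffineHorseshoe
end
end
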